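/- In the transverse p-spin model with p ≥ 2, for every β > 0, J > 0 and b ≥ 0, setting α_p(N) = N!/((N−p)!·N^p), one has liminf_{N→∞} ( E[⟨R_N^p⟩⊗] − α_p(N)·Φ(pβb · E[⟨S_1^x⟩]) − (2/(βJ·N))·E[⟨U_N⟩] ) ≥ 0, where the Gibbs and disorder expectations inside the liminf are taken in the N-spin model. -/

import Mathlib

open Matrix MeasureTheory ProbabilityTheory
open scoped Kronecker

noncomputable section

abbrev Conf (N : ℕ) := Fin N → Fin 2

def Sz (N : ℕ) (j : Fin N) : Matrix (Conf N) (Conf N) ℂ :=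
  Matrix.diagonal fun σ => if σ j = 0 then 1 else -1

def Sx (N : ℕ) (j : Fin N) : Matrix (Conf N) (Conf N) ℂ :=
  Matrix.of fun σ τ => if τ = Function.update σ j (1 - σ j) then 1 else 0

/-- The product `S^z_{j_1} S^z_{j_2} ⋯ S^z_{j_p}` over an index set `s`. -/
def SzProd (N : ℕ) (s : Finset (Fin N)) : Matrix (Conf N) (Conf N) ℂ :=
  Matrix.diagonal fun σ => ∏ j ∈ s, (if σ j = 0 then (1 : ℂ) else -1)

/-- The zero-field `p`-spin Hamiltonian
`U_N = −√(p!/(2N^{p−1})) Σ_{j_1<⋯<j_p} g_{j_1⋯j_p} S^z_{j_1} ⋯ S^z_{j_p}`. -/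
def UNp (N p : ℕ) (g : Finset (Fin N) → ℝ) : Matrix (Conf N) (Conf N) ℂ :=
  (-(Real.sqrt ((Nat.factorial p : ℝ) / (2 * (N : ℝ) ^ (p - 1))))) •
    ∑ s : Finset (Fin N), if s.card = p then g s • SzProd N s else 0

/-- The transverse `p`-spin Hamiltonian `H_N = J·U_N − b·Σ_j S_j^x`. -/
def HNp (N p : ℕ) (J b : ℝ) (g : Finset (Fin N) → ℝ) : Matrix (Conf N) (Conf N) ℂ :=
  J • UNp N p g - b • ∑ j : Fin N, Sx N j

/-- Gibbs expectation (real part of the trace ratio). -/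
def gibbs {n : Type*} [Fintype n] [DecidableEq n] (β : ℝ) (H A : Matrix n n ℂ) : ℝ :=
  ((NormedSpace.exp ((-β) • H) * A).trace / (NormedSpace.exp ((-β) • H)).trace).re

/-- The replica-overlap operator `R_N = N⁻¹ Σ_j S_j^z ⊗ S_j^z` on `ℋ_N ⊗ ℋ_N`. -/
def RN (N : ℕ) : Matrix (Conf N × Conf N) (Conf N × Conf N) ℂ :=
  ((N : ℝ)⁻¹) • ∑ j : Fin N, (Sz N j) ⊗ₖ (Sz N j)

/-- The duplicated Hamiltonian `H_N ⊗ 1 + 1 ⊗ H_N`. -/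
def Hdup (N p : ℕ) (J b : ℝ) (g : Finset (Fin N) → ℝ) :
    Matrix (Conf N × Conf N) (Conf N × Conf N) ℂ :=
  (HNp N p J b g) ⊗ₖ (1 : Matrix (Conf N) (Conf N) ℂ)
    + (1 : Matrix (Conf N) (Conf N) ℂ) ⊗ₖ (HNp N p J b g)

/-- `α_p(N) = N!/((N−p)!·N^p)`. -/
def alphaP (N p : ℕ) : ℝ :=
  (Nat.factorial N : ℝ) / ((Nat.factorial (N - p) : ℝ) * (N : ℝ) ^ p)

/-- The index set `{1, …, p}` of the first `p` spins. -/
def firstP (N p : ℕ) : Finset (Fin N) := Finset.univ.filter fun j : Fin N => (j : ℕ) < p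


lemma sa_tanh_deriv (x : ℝ) : HasDerivAt Real.tanh (1 / Real.cosh x ^ 2) x := by
  have hc := (Real.cosh_pos x).ne'
  have h := (Real.hasDerivAt_sinh x).div (Real.hasDerivAt_cosh x) hc
  have e : Real.tanh = fun y => Real.sinh y / Real.cosh y := by
    funext y; exact Real.tanh_eq_sinh_div_cosh y
  rw [e]
  refine h.congr_deriv ?_
  have := Real.cosh_sq x
  field_simp
  linarith

lemma sa_tanh_nonneg {x : ℝ} (hx : 0 ≤ x) : 0 ≤ Real.tanh x := by
  rw [Real.tanh_eq_sinh_div_cosh]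
  exact div_nonneg (Real.sinh_nonneg_iff.2 hx) (Real.cosh_pos x).le

lemma sa_tanh_le {x : ℝ} (hx : 0 ≤ x) : Real.tanh x ≤ x := by
  have hm : MonotoneOn (fun y : ℝ => y - Real.tanh y) (Set.Ici 0) := by
    apply monotoneOn_of_deriv_nonneg (convex_Ici 0)
    · exact fun y _ => ((hasDerivAt_id y).sub (sa_tanh_deriv y)).continuousAt.continuousWithinAt
    · exact fun y _ => ((hasDerivAt_id y).sub (sa_tanh_deriv y)).differentiableAt.differentiableWithinAt
    · intro y _
      have : deriv (fun y : ℝ => y - Real.tanh y) y = 1 - 1 / Real.cosh y ^ 2 :=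
        ((hasDerivAt_id y).sub (sa_tanh_deriv y)).deriv
      rw [this, sub_nonneg, div_le_one (by have := Real.cosh_pos y; positivity)]
      nlinarith [Real.one_le_cosh y]
  have := hm (Set.mem_Ici.2 le_rfl) (Set.mem_Ici.2 hx) hx
  simp at this
  linarith

lemma sa_tanh_ge {x : ℝ} (hx : 0 ≤ x) : x - x ^ 3 / 3 ≤ Real.tanh x := by
  have hd : ∀ y : ℝ, HasDerivAt (fun y : ℝ => Real.tanh y - (y - y ^ 3 / 3))
      (1 / Real.cosh y ^ 2 - (1 - (3 * y ^ 2) / 3)) y := by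
    intro y
    have h3 : HasDerivAt (fun y : ℝ => y ^ 3) (3 * y ^ 2) y := by
      simpa using hasDerivAt_pow 3 y
    exact (sa_tanh_deriv y).sub ((hasDerivAt_id y).sub (h3.div_const 3))
  have hm : MonotoneOn (fun y : ℝ => Real.tanh y - (y - y ^ 3 / 3)) (Set.Ici 0) := by
    apply monotoneOn_of_deriv_nonneg (convex_Ici 0)
    · exact fun y _ => (hd y).continuousAt.continuousWithinAt
    · exact fun y _ => (hd y).differentiableAt.differentiableWithinAt
    · intro y hy
      simp at hy
      rw [(hd y).deriv]
      have h1 : 1 / Real.cosh y ^ 2 = 1 - Real.tanh y ^ 2 := by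
        have := Real.cosh_sq y
        have hc := (Real.cosh_pos y).ne'
        rw [Real.tanh_eq_sinh_div_cosh]
        field_simp
        linarith
      rw [h1]
      have h2 := sa_tanh_le hy.le
      have h3 := sa_tanh_nonneg hy.le
      nlinarith
  have := hm (Set.mem_Ici.2 le_rfl) (Set.mem_Ici.2 hx) hx
  simp at this
  linarith

lemma sa_sinh_ge {x : ℝ} (hx : 0 ≤ x) : x + x ^ 3 / 6 ≤ Real.sinh x := by
  have hd2 : ∀ y : ℝ, HasDerivAt (fun y : ℝ => Real.cosh y - (1 + y ^ 2 / 2))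
      (Real.sinh y - (2 * y) / 2) y := by
    intro y
    have h3 : HasDerivAt (fun y : ℝ => y ^ 2) (2 * y) y := by
      simpa using hasDerivAt_pow 2 y
    exact (Real.hasDerivAt_cosh y).sub ((h3.div_const 2).const_add 1)
  have hm2 : MonotoneOn (fun y : ℝ => Real.cosh y - (1 + y ^ 2 / 2)) (Set.Ici 0) := by
    apply monotoneOn_of_deriv_nonneg (convex_Ici 0)
    · exact fun y _ => (hd2 y).continuousAt.continuousWithinAt
    · exact fun y _ => (hd2 y).differentiableAt.differentiableWithinAt
    · intro y hy
      simp at hy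
      rw [(hd2 y).deriv]
      have := Real.self_le_sinh_iff.2 hy.le
      linarith
  have hd : ∀ y : ℝ, HasDerivAt (fun y : ℝ => Real.sinh y - (y + y ^ 3 / 6))
      (Real.cosh y - (1 + (3 * y ^ 2) / 6)) y := by
    intro y
    have h3 : HasDerivAt (fun y : ℝ => y ^ 3) (3 * y ^ 2) y := by
      simpa using hasDerivAt_pow 3 y
    exact (Real.hasDerivAt_sinh y).sub ((hasDerivAt_id y).add (h3.div_const 6))
  have hm : MonotoneOn (fun y : ℝ => Real.sinh y - (y + y ^ 3 / 6)) (Set.Ici 0) := by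
    apply monotoneOn_of_deriv_nonneg (convex_Ici 0)
    · exact fun y _ => (hd y).continuousAt.continuousWithinAt
    · exact fun y _ => (hd y).differentiableAt.differentiableWithinAt
    · intro y hy
      simp at hy
      rw [(hd y).deriv]
      have := hm2 (Set.mem_Ici.2 le_rfl) (Set.mem_Ici.2 hy.le) hy.le
      simp at this
      linarith
  have := hm (Set.mem_Ici.2 le_rfl) (Set.mem_Ici.2 hx) hx
  simp at this
  linarith

lemma sa_key {x : ℝ} (hx : 0 ≤ x) :
    0 ≤ Real.sinh x ^ 2 + x * Real.tanh x - 2 * x ^ 2 := by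
  have h1 := sa_sinh_ge hx
  have h2 := sa_tanh_ge hx
  have h3 : (x + x ^ 3 / 6) ^ 2 ≤ Real.sinh x ^ 2 := by
    apply pow_le_pow_left₀ (by positivity) h1
  have h4 : x * (x - x ^ 3 / 3) ≤ x * Real.tanh x := mul_le_mul_of_nonneg_left h2 hx
  nlinarith [sq_nonneg (x ^ 3)]

lemma sa_Q_pos {x : ℝ} (hx : 0 < x) : 0 < Real.sinh x * Real.cosh x - x := by
  have h1 := Real.self_lt_sinh_iff.2 hx
  have h2 := Real.one_le_cosh x
  nlinarith

noncomputable def saW (x : ℝ) : ℝ := x ^ 2 + 2 * x ^ 3 / (Real.sinh x * Real.cosh x - x)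

lemma saW_mono : MonotoneOn saW (Set.Ioi 0) := by
  have hd : ∀ y : ℝ, 0 < y → HasDerivAt saW
      (2 * y + ((2 * (3 * y ^ 2)) * (Real.sinh y * Real.cosh y - y) -
        2 * y ^ 3 * (Real.cosh y * Real.cosh y + Real.sinh y * Real.sinh y - 1))
          / (Real.sinh y * Real.cosh y - y) ^ 2) y := by
    intro y hy
    have h3 : HasDerivAt (fun y : ℝ => y ^ 3) (3 * y ^ 2) y := by
      simpa using hasDerivAt_pow 3 y
    have h2 : HasDerivAt (fun y : ℝ => y ^ 2) (2 * y) y := by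
      simpa using hasDerivAt_pow 2 y
    exact h2.add ((h3.const_mul 2).div
      (((Real.hasDerivAt_sinh y).mul (Real.hasDerivAt_cosh y)).sub (hasDerivAt_id y))
      (sa_Q_pos hy).ne')
  apply monotoneOn_of_deriv_nonneg (convex_Ioi 0)
  · exact fun y hy => (hd y hy).continuousAt.continuousWithinAt
  · exact fun y hy => (hd y (by simpa using hy)).differentiableAt.differentiableWithinAt
  · intro y hy
    simp at hy
    rw [(hd y hy).deriv]
    have hQ := sa_Q_pos hy
    have hk := sa_key hy.le
    have hc := Real.cosh_pos y
    have hcs := Real.cosh_sq y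
    have ht : Real.sinh y = Real.tanh y * Real.cosh y := by
      rw [Real.tanh_eq_sinh_div_cosh]; field_simp
    have e : 2 * y + ((2 * (3 * y ^ 2)) * (Real.sinh y * Real.cosh y - y) -
        2 * y ^ 3 * (Real.cosh y * Real.cosh y + Real.sinh y * Real.sinh y - 1))
          / (Real.sinh y * Real.cosh y - y) ^ 2 =
        2 * y * Real.cosh y ^ 2 * (Real.sinh y ^ 2 + y * Real.tanh y - 2 * y ^ 2) /
          (Real.sinh y * Real.cosh y - y) ^ 2 := by
      rw [eq_div_iff (by positivity), add_mul, div_mul_cancel₀ _ (by positivity)]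
      have h5 : Real.cosh y ^ 2 * (Real.sinh y ^ 2 + y * Real.tanh y - 2 * y ^ 2) =
        Real.cosh y ^ 2 * Real.sinh y ^ 2 + y * Real.sinh y * Real.cosh y - 2 * y ^ 2 * Real.cosh y ^ 2 := by
        rw [ht]; ring
      rw [mul_assoc (2*y), h5]
      have h6 : Real.sinh y * Real.sinh y = Real.cosh y ^ 2 - 1 := by linarith [hcs]
      rw [h6]
      ring
    rw [e]
    positivity

lemma sa_support {r : ℝ} (hr : 0 < r) : ∃ κ : ℝ, ∀ x : ℝ, 0 < x →
    Real.tanh r / r + κ * (r * Real.tanh r) ≤ Real.tanh x / x + κ * (x * Real.tanh x) := by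
  have hW : ∀ x : ℝ, 0 < x → 0 < saW x := by
    intro x hx
    have := sa_Q_pos hx
    unfold saW; positivity
  refine ⟨1 / saW r, ?_⟩
  set κ := 1 / saW r with hκ
  have hd : ∀ y : ℝ, 0 < y → HasDerivAt (fun x => Real.tanh x / x + κ * (x * Real.tanh x))
      ((Real.sinh y * Real.cosh y + y) / Real.cosh y ^ 2 * (κ - 1 / saW y)) y := by
    intro y hy
    have h := ((sa_tanh_deriv y).div (hasDerivAt_id y) hy.ne').add
      (((hasDerivAt_id y).mul (sa_tanh_deriv y)).const_mul κ)
    refine h.congr_deriv ?_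
    have hQ := (sa_Q_pos hy).ne'
    have hc := (Real.cosh_pos y).ne'
    have hs := Real.sinh_pos_iff.2 hy
    have hP : (Real.sinh y * Real.cosh y + y) ≠ 0 := by
      have := Real.cosh_pos y; positivity
    have hw : 1 / saW y = (Real.sinh y * Real.cosh y - y) / (y ^ 2 * (Real.sinh y * Real.cosh y + y)) := by
      unfold saW
      have : y ^ 2 + 2 * y ^ 3 / (Real.sinh y * Real.cosh y - y) =
        (y ^ 2 * (Real.sinh y * Real.cosh y + y)) / (Real.sinh y * Real.cosh y - y) := by
        field_simp; ring
      rw [this, one_div_div]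
    rw [hw, Real.tanh_eq_sinh_div_cosh]
    simp only [id]
    field_simp
    ring
  have hPpos : ∀ y : ℝ, 0 < y → 0 ≤ (Real.sinh y * Real.cosh y + y) / Real.cosh y ^ 2 := by
    intro y hy
    have hs := Real.sinh_pos_iff.2 hy
    have := Real.cosh_pos y; positivity
  intro x hx
  rcases le_total x r with hxr | hxr
  · have hm : AntitoneOn (fun x => Real.tanh x / x + κ * (x * Real.tanh x)) (Set.Ioc 0 r) := by
      apply antitoneOn_of_deriv_nonpos (convex_Ioc 0 r)
      · exact fun y hy => (hd y hy.1).continuousAt.continuousWithinAt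
      · intro y hy
        rw [interior_Ioc] at hy
        exact (hd y hy.1).differentiableAt.differentiableWithinAt
      · intro y hy
        rw [interior_Ioc] at hy
        rw [(hd y hy.1).deriv]
        apply mul_nonpos_of_nonneg_of_nonpos (hPpos y hy.1)
        rw [sub_nonpos]
        exact one_div_le_one_div_of_le (hW y hy.1) (saW_mono hy.1 hr hy.2.le)
    exact hm ⟨hx, hxr⟩ ⟨hr, le_rfl⟩ hxr
  · have hm : MonotoneOn (fun x => Real.tanh x / x + κ * (x * Real.tanh x)) (Set.Ici r) := by
      apply monotoneOn_of_deriv_nonneg (convex_Ici r)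
      · exact fun y hy => (hd y (hr.trans_le hy)).continuousAt.continuousWithinAt
      · intro y hy
        rw [interior_Ici] at hy
        exact (hd y (hr.trans hy)).differentiableAt.differentiableWithinAt
      · intro y hy
        rw [interior_Ici] at hy
        have hy0 : 0 < y := hr.trans hy
        rw [(hd y hy0).deriv]
        apply mul_nonneg (hPpos y hy0)
        rw [sub_nonneg]
        exact one_div_le_one_div_of_le (hW r hr) (saW_mono hr hy0 (le_of_lt hy))
    exact hm (Set.mem_Ici.2 le_rfl) hxr hxr

lemma sa_exists_r {t : ℝ} (ht : 0 < t) : ∃ r : ℝ, 0 < r ∧ r * Real.tanh r = t := by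
  have hcont : Continuous fun r : ℝ => r * Real.tanh r :=
    continuous_id.mul (continuous_iff_continuousAt.2 fun y => (sa_tanh_deriv y).continuousAt)
  -- at R = 2 t + 2, tanh R ≥ R/(1+R)
  set R := t + 1 with hR
  have hRp : 0 < R := by linarith
  have hbig : t ≤ R * Real.tanh R := by
    have h1 : R ≤ Real.sinh R := (Real.self_lt_sinh_iff.2 hRp).le
    have h2 : Real.cosh R - Real.sinh R ≤ 1 := by
      rw [Real.cosh_sub_sinh]; exact Real.exp_le_one_iff.2 (by linarith)
    have hc := Real.cosh_pos R
    rw [Real.tanh_eq_sinh_div_cosh, ← mul_div_assoc, le_div_iff₀ hc]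
    nlinarith
  obtain ⟨r, hr, hr2⟩ := intermediate_value_Icc hRp.le hcont.continuousOn
    (show t ∈ Set.Icc ((fun r : ℝ => r * Real.tanh r) 0) ((fun r : ℝ => r * Real.tanh r) R) by
      simp only [zero_mul]; exact ⟨ht.le, hbig⟩)
  refine ⟨r, lt_of_le_of_ne hr.1 ?_, hr2⟩
  rintro rfl
  simp at hr2
  linarith

/-- supporting line for `Φ` -/
lemma sa_Phi (Φ : ℝ → ℝ) (hΦ : ∀ r : ℝ, 0 < r → Φ (r * Real.tanh r) = Real.tanh r / r)
    (hΦ0 : Φ 0 = 1) {t : ℝ} (ht : 0 ≤ t) : ∃ κ : ℝ, ∀ x : ℝ, 0 < x →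
    Φ t + κ * t ≤ Real.tanh x / x + κ * (x * Real.tanh x) := by
  rcases ht.eq_or_lt with rfl | ht
  · refine ⟨1, fun x hx => ?_⟩
    rw [hΦ0]
    have h1 : x ≤ Real.sinh x := (Real.self_lt_sinh_iff.2 hx).le
    have h2 : Real.cosh x - Real.sinh x ≤ 1 := by
      rw [Real.cosh_sub_sinh]; exact Real.exp_le_one_iff.2 (by linarith)
    have hc := Real.cosh_pos x
    rw [Real.tanh_eq_sinh_div_cosh]
    have : Real.sinh x / Real.cosh x / x + 1 * (x * (Real.sinh x / Real.cosh x)) =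
      (Real.sinh x * (1 + x ^ 2)) / (x * Real.cosh x) := by field_simp
    rw [this, mul_zero, add_zero, le_div_iff₀ (by positivity)]
    rcases le_total x 1 with h | h
    · have h3 := sa_tanh_ge hx.le
      rw [Real.tanh_eq_sinh_div_cosh, le_div_iff₀ hc] at h3
      have h4 : (x - x ^ 3 / 3) * Real.cosh x * (1 + x ^ 2) ≤ Real.sinh x * (1 + x ^ 2) :=
        mul_le_mul_of_nonneg_right h3 (by positivity)
      have h5 : 0 ≤ x ^ 3 * Real.cosh x * (2 - x ^ 2) :=
        mul_nonneg (by positivity) (by nlinarith)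
      nlinarith
    · have h3 : x * Real.cosh x ≤ x * (Real.sinh x + 1) :=
        mul_le_mul_of_nonneg_left (by linarith) hx.le
      have h4 : 0 ≤ (Real.sinh x - x) * (1 - x + x ^ 2) :=
        mul_nonneg (by linarith) (by nlinarith)
      have h5 : 0 ≤ x ^ 2 * (x - 1) := mul_nonneg (by positivity) (by linarith)
      nlinarith
  · obtain ⟨r, hr, rfl⟩ := sa_exists_r ht
    obtain ⟨κ, h⟩ := sa_support hr
    exact ⟨κ, fun x hx => by rw [hΦ r hr]; exact h x hx⟩
lemma sb_int (a b : ℝ) (h : a ≠ b) :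
    ∫ s in (0:ℝ)..1, Real.exp (s * a + (1 - s) * b) = (Real.exp a - Real.exp b) / (a - b) := by
  have hab : a - b ≠ 0 := sub_ne_zero.2 h
  have hd : ∀ s ∈ Set.uIcc (0:ℝ) 1, HasDerivAt (fun s : ℝ => Real.exp (s * a + (1 - s) * b) / (a - b))
      (Real.exp (s * a + (1 - s) * b)) s := by
    intro s _
    have h1 : HasDerivAt (fun s : ℝ => s * a + (1 - s) * b) (1 * a + (-1) * b) s :=
      ((hasDerivAt_id s).mul_const a).add (((hasDerivAt_id s).const_sub 1).mul_const b)
    refine (h1.exp.div_const (a - b)).congr_deriv ?_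
    field_simp
    ring
  rw [intervalIntegral.integral_eq_sub_of_hasDerivAt hd (Continuous.intervalIntegrable (by fun_prop) _ _)]
  simp
  ring

lemma sb_int_ge_aux {c κ : ℝ}
    (hc : ∀ x : ℝ, 0 < x → c ≤ Real.tanh x / x + κ * (x * Real.tanh x)) {a b : ℝ} (h : b < a) :
    c * ((Real.exp a + Real.exp b) / 2) - κ * ((Real.exp a - Real.exp b) * (a - b) / 4) ≤
      (Real.exp a - Real.exp b) / (a - b) := by
  set x := (a - b) / 2 with hx
  have hxp : 0 < x := by linarith
  have h1 := hc x hxp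
  set m := (a + b) / 2 with hm
  have ha : a = m + x := by rw [hm, hx]; ring
  have hb : b = m - x := by rw [hm, hx]; ring
  have hchp := Real.cosh_pos x
  have e1 : Real.exp a + Real.exp b = 2 * Real.exp m * Real.cosh x := by
    rw [ha, hb, Real.exp_add, sub_eq_add_neg m x, Real.exp_add, Real.cosh_eq]; ring
  have e2 : Real.exp a - Real.exp b = 2 * Real.exp m * Real.sinh x := by
    rw [ha, hb, Real.exp_add, sub_eq_add_neg m x, Real.exp_add, Real.sinh_eq]; ring
  have e3 : a - b = 2 * x := by rw [hx]; ring
  rw [e1, e2, e3]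
  have h2 := mul_le_mul_of_nonneg_right h1 (by positivity : 0 ≤ Real.exp m * Real.cosh x)
  rw [Real.tanh_eq_sinh_div_cosh] at h2
  have e4 : (Real.sinh x / Real.cosh x / x + κ * (x * (Real.sinh x / Real.cosh x))) * (Real.exp m * Real.cosh x)
    = 2 * Real.exp m * Real.sinh x / (2 * x) + κ * (2 * Real.exp m * Real.sinh x * (2 * x) / 4) := by
    field_simp
    ring
  linarith

lemma sb_c_le_one {c κ : ℝ} (htanh : ∀ x : ℝ, 0 ≤ x → Real.tanh x ≤ x)
    (hc : ∀ x : ℝ, 0 < x → c ≤ Real.tanh x / x + κ * (x * Real.tanh x)) : c ≤ 1 := by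
  have hb : ∀ x : ℝ, 0 < x → c ≤ 1 + |κ| * x ^ 2 := by
    intro x hx
    have h1 := hc x hx
    have h2 := htanh x hx.le
    have h3 : Real.tanh x / x ≤ 1 := (div_le_one hx).2 h2
    have h5 : 0 ≤ Real.tanh x := by
      rw [Real.tanh_eq_sinh_div_cosh]
      exact div_nonneg (Real.sinh_nonneg_iff.2 hx.le) (Real.cosh_pos x).le
    have h4 : κ * (x * Real.tanh x) ≤ |κ| * x ^ 2 := by
      calc κ * (x * Real.tanh x) ≤ |κ| * (x * Real.tanh x) :=
            mul_le_mul_of_nonneg_right (le_abs_self κ) (by positivity)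
        _ ≤ |κ| * x ^ 2 := mul_le_mul_of_nonneg_left (by nlinarith) (abs_nonneg κ)
    linarith
  have ht : Filter.Tendsto (fun x : ℝ => 1 + |κ| * x ^ 2) (nhdsWithin 0 (Set.Ioi 0)) (nhds (1 + |κ| * 0 ^ 2)) := by
    apply Filter.Tendsto.mono_left _ nhdsWithin_le_nhds
    exact Continuous.tendsto (by fun_prop) 0
  have := ge_of_tendsto ht (Filter.eventually_of_mem self_mem_nhdsWithin fun x hx => hb x hx)
  simpa using this

lemma sb_int_ge {c κ : ℝ} (htanh : ∀ x : ℝ, 0 ≤ x → Real.tanh x ≤ x)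
    (hc : ∀ x : ℝ, 0 < x → c ≤ Real.tanh x / x + κ * (x * Real.tanh x)) (a b : ℝ) :
    c * ((Real.exp a + Real.exp b) / 2) - κ * ((Real.exp a - Real.exp b) * (a - b) / 4) ≤
      ∫ s in (0:ℝ)..1, Real.exp (s * a + (1 - s) * b) := by
  rcases lt_trichotomy a b with h | h | h
  · rw [sb_int a b h.ne]
    have := sb_int_ge_aux hc h
    have e : (Real.exp a - Real.exp b) / (a - b) = (Real.exp b - Real.exp a) / (b - a) := by
      rw [← neg_sub (Real.exp b), ← neg_sub b, neg_div_neg_eq]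
    rw [e]
    linarith
  · subst h
    have e : ∀ s : ℝ, s * a + (1 - s) * a = a := fun s => by ring
    simp only [e]
    have := sb_c_le_one htanh hc
    simp
    nlinarith [Real.exp_pos a]
  · rw [sb_int a b h.ne']
    exact sb_int_ge_aux hc h

lemma sb_int_le (a b : ℝ) :
    ∫ s in (0:ℝ)..1, Real.exp (s * a + (1 - s) * b) ≤ Real.exp a + Real.exp b := by
  have : ∫ s in (0:ℝ)..1, Real.exp (s * a + (1 - s) * b) ≤
      ∫ s in (0:ℝ)..1, (Real.exp a + Real.exp b) := by
    apply intervalIntegral.integral_mono_on zero_le_one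
    · exact Continuous.intervalIntegrable (by fun_prop) _ _
    · exact Continuous.intervalIntegrable (by fun_prop) _ _
    · intro s hs
      rcases le_total a b with h | h
      · have : Real.exp (s * a + (1 - s) * b) ≤ Real.exp b := Real.exp_le_exp.2 (by nlinarith [hs.1, hs.2])
        linarith [Real.exp_pos a]
      · have : Real.exp (s * a + (1 - s) * b) ≤ Real.exp a := Real.exp_le_exp.2 (by nlinarith [hs.1, hs.2])
        linarith [Real.exp_pos b]
  simpa using this

lemma sb_int_nonneg (a b : ℝ) :
    0 ≤ ∫ s in (0:ℝ)..1, Real.exp (s * a + (1 - s) * b) :=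
  intervalIntegral.integral_nonneg zero_le_one fun _ _ => (Real.exp_pos _).le

section
variable {n : Type*} [Fintype n] [DecidableEq n]

lemma sb_spec (X A : Matrix n n ℂ) (hX : X.IsHermitian) (hA : A.IsHermitian) (hAA : A * A = 1) :
    ∃ (d : n → ℝ) (P : n → n → ℝ) (q : n → ℝ), (∀ i j, 0 ≤ P i j) ∧ (∀ i j, P i j = P j i) ∧
      (∀ i, ∑ j, P i j = 1) ∧ (∀ i, |q i| ≤ 1) ∧
      (NormedSpace.exp X).trace = ((∑ i, Real.exp (d i) : ℝ) : ℂ) ∧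
      (NormedSpace.exp X * A).trace = ((∑ i, Real.exp (d i) * q i : ℝ) : ℂ) ∧
      (∀ s : ℝ, (NormedSpace.exp (s • X) * A * NormedSpace.exp ((1 - s) • X) * A).trace =
        ((∑ i, ∑ j, P i j * Real.exp (s * d i + (1 - s) * d j) : ℝ) : ℂ)) ∧
      (NormedSpace.exp X * (X - A * X * A)).trace =
        ((∑ i, ∑ j, P i j * (Real.exp (d i) * (d i - d j)) : ℝ) : ℂ) := by
  set U : Matrix n n ℂ := (hX.eigenvectorUnitary : Matrix n n ℂ) with hU
  set V : Matrix n n ℂ := star U with hV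
  have hUV : U * V = 1 := Unitary.mul_star_self_of_mem hX.eigenvectorUnitary.2
  have hVU : V * U = 1 := Unitary.star_mul_self_of_mem hX.eigenvectorUnitary.2
  set d := hX.eigenvalues with hd
  set D : Matrix n n ℂ := diagonal (fun i => ((d i : ℝ) : ℂ)) with hD
  have hXD : X = U * D * V := by
    have := hX.spectral_theorem
    rw [Unitary.conjStarAlgAut_apply] at this
    exact this
  have hUu : IsUnit U := IsUnit.of_mul_eq_one V hUV
  have hUinv : U⁻¹ = V := Matrix.inv_eq_right_inv hUV
  have hexp : ∀ s : ℝ, NormedSpace.exp (s • X) =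
      U * diagonal (fun i => ((Real.exp (s * d i) : ℝ) : ℂ)) * V := by
    intro s
    have : s • X = U * (s • D) * U⁻¹ := by rw [hXD, hUinv]; simp
    rw [this, Matrix.exp_conj _ _ hUu, hUinv]
    congr 2
    rw [hD, ← Matrix.diagonal_smul, Matrix.exp_diagonal]
    congr 1
    funext i
    rw [Pi.coe_exp]
    simp [← Complex.exp_eq_exp_ℂ]
  have hexp1 : NormedSpace.exp X = U * diagonal (fun i => ((Real.exp (d i) : ℝ) : ℂ)) * V := by
    have := hexp 1
    simpa using this
  set B : Matrix n n ℂ := V * A * U with hB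
  have hAB : A = U * B * V := by
    rw [hB]
    calc A = (U * V) * A * (U * V) := by rw [hUV]; simp
      _ = _ := by noncomm_ring
  have hBH : B.IsHermitian := by
    rw [hB, hV, star_eq_conjTranspose, IsHermitian, conjTranspose_mul, conjTranspose_mul, hA.eq]
    simp [mul_assoc]
  have hBB : B * B = 1 := by
    rw [hB]
    calc V * A * U * (V * A * U) = V * (A * (U * V) * A) * U := by noncomm_ring
      _ = 1 := by rw [hUV, mul_one, hAA, mul_one, hVU]
  have hstar : ∀ i j, B j i = star (B i j) := fun i j => (hBH.apply i j).symm ▸ by simp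
  have hBsq : ∀ i j, B i j * B j i = ((Complex.normSq (B i j) : ℝ) : ℂ) := by
    intro i j
    rw [hstar i j]
    exact Complex.mul_conj _
  have hrow : ∀ i, ∑ j, Complex.normSq (B i j) = 1 := by
    intro i
    have := congrFun (congrFun hBB i) i
    rw [Matrix.mul_apply, Matrix.one_apply_eq] at this
    simp only [hBsq] at this
    exact_mod_cast this
  have hconj : ∀ Y : Matrix n n ℂ, (U * Y * V).trace = Y.trace := by
    intro Y
    rw [Matrix.trace_mul_comm, ← mul_assoc, hVU, one_mul]
  have hdiag : ∀ i, B i i = ((B i i).re : ℂ) := by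
    intro i
    have := hstar i i
    exact (Complex.conj_eq_iff_re.1 this.symm).symm
  refine ⟨d, fun i j => Complex.normSq (B i j), fun i => (B i i).re, fun i j => Complex.normSq_nonneg _,
    ?_, hrow, ?_, ?_, ?_, ?_, ?_⟩
  · intro i j
    change Complex.normSq (B i j) = Complex.normSq (B j i)
    rw [hstar i j]
    exact (Complex.normSq_conj _).symm
  · intro i
    have h1 : Complex.normSq (B i i) ≤ 1 := by
      rw [← hrow i]
      exact Finset.single_le_sum (f := fun j => Complex.normSq (B i j)) (fun j _ => Complex.normSq_nonneg _) (Finset.mem_univ i)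
    rw [Complex.normSq_apply] at h1
    rw [abs_le_one_iff_mul_self_le_one]
    nlinarith [mul_self_nonneg (B i i).im]
  · rw [hexp1, hconj, trace_diagonal]
    push_cast; rfl
  · rw [hexp1]
    have : U * diagonal (fun i => ((Real.exp (d i) : ℝ) : ℂ)) * V * A =
        U * (diagonal (fun i => ((Real.exp (d i) : ℝ) : ℂ)) * B) * V := by
      rw [hAB]
      calc _ = U * diagonal (fun i => ((Real.exp (d i) : ℝ) : ℂ)) * (V * U) * B * V := by noncomm_ring
        _ = _ := by rw [hVU]; noncomm_ring
    rw [this, hconj, trace]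
    push_cast
    refine Finset.sum_congr rfl fun i _ => ?_
    rw [diag_apply, diagonal_mul, ← hdiag i]
  · intro s
    rw [hexp, hexp]
    set E := diagonal (fun i => ((Real.exp (s * d i) : ℝ) : ℂ))
    set F := diagonal (fun i => ((Real.exp ((1 - s) * d i) : ℝ) : ℂ))
    have : U * E * V * A * (U * F * V) * A = U * (E * B * F * B) * V := by
      rw [hAB]
      calc _ = U * E * (V * U) * B * (V * U) * F * (V * U) * B * V := by noncomm_ring
        _ = _ := by rw [hVU]; noncomm_ring
    rw [this, hconj, trace]
    push_cast
    refine Finset.sum_congr rfl fun i _ => ?_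
    rw [diag_apply, Matrix.mul_apply]
    refine Finset.sum_congr rfl fun j _ => ?_
    rw [Matrix.mul_diagonal, Matrix.diagonal_mul, ← hBsq, Complex.exp_add]
    push_cast
    ring
  · rw [hexp1]
    set E := diagonal (fun i => ((Real.exp (d i) : ℝ) : ℂ))
    have : U * E * V * (X - A * X * A) = U * (E * D - E * B * D * B) * V := by
      rw [hAB, hXD]
      calc _ = U * E * (V * U) * D * V - U * E * (V * U) * B * (V * U) * D * (V * U) * B * V := by noncomm_ring
        _ = _ := by rw [hVU]; noncomm_ring
    rw [this, hconj, trace]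
    push_cast
    refine Finset.sum_congr rfl fun i _ => ?_
    rw [diag_apply, Matrix.sub_apply]
    have h1 : (E * D) i i = ∑ j, ((Complex.normSq (B i j) : ℝ) : ℂ) * (Complex.exp (d i) * d i) := by
      rw [← Finset.sum_mul]
      have : (∑ j, ((Complex.normSq (B i j) : ℝ) : ℂ)) = 1 := by exact_mod_cast hrow i
      rw [this, Matrix.diagonal_mul_diagonal, diagonal_apply_eq]
      simp
    rw [h1, Matrix.mul_apply, ← Finset.sum_sub_distrib]
    refine Finset.sum_congr rfl fun j _ => ?_
    rw [Matrix.mul_diagonal, Matrix.diagonal_mul, ← hBsq]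
    push_cast
    ring
end
section
variable {𝔸 : Type*} [NormedRing 𝔸] [NormedAlgebra ℝ 𝔸] [CompleteSpace 𝔸]

lemma sc_duhamel (X Y : 𝔸) : NormedSpace.exp Y - NormedSpace.exp X =
    ∫ s in (0:ℝ)..1, NormedSpace.exp (s • Y) * (Y - X) * NormedSpace.exp ((1 - s) • X) := by
  let _ : NormedAlgebra ℚ 𝔸 := NormedAlgebra.restrictScalars ℚ ℝ 𝔸
  have hc : Continuous (NormedSpace.exp : 𝔸 → 𝔸) := NormedSpace.exp_continuous
  have hd : ∀ s ∈ Set.uIcc (0:ℝ) 1, HasDerivAt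
      (fun s : ℝ => NormedSpace.exp (s • Y) * NormedSpace.exp ((1 - s) • X))
      (NormedSpace.exp (s • Y) * (Y - X) * NormedSpace.exp ((1 - s) • X)) s := by
    intro s _
    have h1 := hasDerivAt_exp_smul_const (𝕂 := ℝ) Y s
    have h2 := (hasDerivAt_exp_smul_const' (𝕂 := ℝ) X (1 - s)).scomp s
      ((hasDerivAt_id s).const_sub 1)
    refine (h1.mul h2).congr_deriv ?_
    simp only [Function.comp, neg_smul, one_smul]
    noncomm_ring
  rw [intervalIntegral.integral_eq_sub_of_hasDerivAt hd]
  · simp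
  · apply Continuous.intervalIntegrable
    fun_prop

lemma sc_exp_deriv (X A : 𝔸) : HasDerivAt (fun t : ℝ => NormedSpace.exp (X + t • A))
    (∫ s in (0:ℝ)..1, NormedSpace.exp (s • X) * A * NormedSpace.exp ((1 - s) • X)) 0 := by
  let _ : NormedAlgebra ℚ 𝔸 := NormedAlgebra.restrictScalars ℚ ℝ 𝔸
  have hc : Continuous (NormedSpace.exp : 𝔸 → 𝔸) := NormedSpace.exp_continuous
  set G : ℝ → 𝔸 := fun t => ∫ s in (0:ℝ)..1,
    NormedSpace.exp (s • (X + t • A)) * A * NormedSpace.exp ((1 - s) • X) with hG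
  have hGc : Continuous G := by
    apply intervalIntegral.continuous_parametric_intervalIntegral_of_continuous'
    simp only [Function.uncurry_def]
    fun_prop
  have h0 : G 0 = ∫ s in (0:ℝ)..1, NormedSpace.exp (s • X) * A * NormedSpace.exp ((1 - s) • X) := by
    simp [hG]
  rw [← h0, hasDerivAt_iff_tendsto_slope]
  refine ((hGc.tendsto 0).mono_left nhdsWithin_le_nhds).congr' ?_
  filter_upwards [self_mem_nhdsWithin] with t ht
  have ht : t ≠ 0 := ht
  rw [slope_def_module]
  simp only [zero_smul, add_zero, sub_zero]
  rw [sc_duhamel X (X + t • A)]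
  simp only [add_sub_cancel_left, mul_smul_comm, smul_mul_assoc]
  rw [intervalIntegral.integral_smul, smul_smul, inv_mul_cancel₀ ht, one_smul]

lemma sc_L_deriv (X A : 𝔸) (L : 𝔸 →L[ℝ] ℝ) :
    HasDerivAt (fun t : ℝ => L (NormedSpace.exp (X + t • A)))
    (∫ s in (0:ℝ)..1, L (NormedSpace.exp (s • X) * A * NormedSpace.exp ((1 - s) • X))) 0 := by
  let _ : NormedAlgebra ℚ 𝔸 := NormedAlgebra.restrictScalars ℚ ℝ 𝔸
  have hc : Continuous (NormedSpace.exp : 𝔸 → 𝔸) := NormedSpace.exp_continuous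
  have h := L.hasFDerivAt.comp_hasDerivAt (0:ℝ) (sc_exp_deriv X A)
  rw [← ContinuousLinearMap.intervalIntegral_comp_comm] at h
  · exact h
  · apply Continuous.intervalIntegrable
    fun_prop

end

section
variable {n : Type*} [Fintype n] [DecidableEq n]

lemma sc_exp_continuous : Continuous (NormedSpace.exp : Matrix n n ℂ → Matrix n n ℂ) := by
  let _ : NormedRing (Matrix n n ℂ) := Matrix.linftyOpNormedRing
  let _ : NormedAlgebra ℝ (Matrix n n ℂ) := Matrix.linftyOpNormedAlgebra
  let _ : NormedAlgebra ℚ (Matrix n n ℂ) := NormedAlgebra.restrictScalars ℚ ℝ _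
  exact NormedSpace.exp_continuous

lemma sc_tr_deriv (X A B : Matrix n n ℂ) :
    HasDerivAt (fun t : ℝ => (NormedSpace.exp (X + t • A) * B).trace.re)
    (∫ s in (0:ℝ)..1, (NormedSpace.exp (s • X) * A * NormedSpace.exp ((1 - s) • X) * B).trace.re) 0 := by
  let _ : NormedRing (Matrix n n ℂ) := Matrix.linftyOpNormedRing
  let _ : NormedAlgebra ℝ (Matrix n n ℂ) := Matrix.linftyOpNormedAlgebra
  let L0 : Matrix n n ℂ →ₗ[ℝ] ℝ :=
    { toFun := fun M => (M * B).trace.re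
      map_add' := fun M N => by simp [add_mul]
      map_smul' := fun r M => by simp }
  let L : Matrix n n ℂ →L[ℝ] ℝ := ⟨L0, by
    change Continuous fun M : Matrix n n ℂ => (M * B).trace.re
    fun_prop⟩
  exact sc_L_deriv X A L

/-- Gibbs mean with respect to `exp X`. -/
noncomputable def gm (X A : Matrix n n ℂ) : ℝ :=
  ((NormedSpace.exp X * A).trace / (NormedSpace.exp X).trace).re

lemma gm_eq {X A : Matrix n n ℂ} {z a : ℝ} (hz : (NormedSpace.exp X).trace = (z : ℂ))
    (ha : (NormedSpace.exp X * A).trace = (a : ℂ)) : gm X A = a / z := by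
  rw [gm, hz, ha, ← Complex.ofReal_div, Complex.ofReal_re]

lemma gm_abs_le [Nonempty n] {X A : Matrix n n ℂ} (hX : X.IsHermitian) (hA : A.IsHermitian) (hAA : A * A = 1) :
    |gm X A| ≤ 1 := by
  obtain ⟨d, P, q, hP, hPs, hP1, hq, hZ, hT, -, -⟩ := sb_spec X A hX hA hAA
  rw [gm_eq hZ hT, abs_div]
  have hZp : 0 < ∑ i, Real.exp (d i) := Finset.sum_pos (fun i _ => Real.exp_pos _) Finset.univ_nonempty
  rw [abs_of_pos hZp, div_le_one hZp]
  refine (Finset.abs_sum_le_sum_abs _ _).trans (Finset.sum_le_sum fun i _ => ?_)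
  rw [abs_mul, abs_of_pos (Real.exp_pos _)]
  exact mul_le_of_le_one_right (Real.exp_pos _).le (hq i)

lemma sym_sum {d : n → ℝ} {P : n → n → ℝ} (hPs : ∀ i j, P i j = P j i) :
    ∑ i, ∑ j, P i j * (Real.exp (d i) * (d i - d j)) =
    ∑ i, ∑ j, P i j * ((Real.exp (d i) - Real.exp (d j)) * (d i - d j) / 2) := by
  have h : ∑ i, ∑ j, P i j * (Real.exp (d i) * (d i - d j)) =
    ∑ i, ∑ j, P i j * (Real.exp (d j) * (d j - d i)) := by
    rw [Finset.sum_comm]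
    exact Finset.sum_congr rfl fun i _ => Finset.sum_congr rfl fun j _ => by rw [hPs]
  have h2 : ∑ i, ∑ j, P i j * ((Real.exp (d i) - Real.exp (d j)) * (d i - d j) / 2) =
      (∑ i, ∑ j, P i j * (Real.exp (d i) * (d i - d j)) +
        ∑ i, ∑ j, P i j * (Real.exp (d j) * (d j - d i))) / 2 := by
    rw [← Finset.sum_add_distrib, Finset.sum_div]
    refine Finset.sum_congr rfl fun i _ => ?_
    rw [← Finset.sum_add_distrib, Finset.sum_div]
    refine Finset.sum_congr rfl fun j _ => ?_
    ring
  rw [h2, ← h]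
  ring

lemma gm_comm_nonneg [Nonempty n] {X A : Matrix n n ℂ} (hX : X.IsHermitian) (hA : A.IsHermitian)
    (hAA : A * A = 1) : 0 ≤ gm X (X - A * X * A) := by
  obtain ⟨d, P, q, hP, hPs, hP1, hq, hZ, -, -, hC⟩ := sb_spec X A hX hA hAA
  rw [gm_eq hZ hC, sym_sum hPs]
  apply div_nonneg
  · refine Finset.sum_nonneg fun i _ => Finset.sum_nonneg fun j _ => mul_nonneg (hP i j) ?_
    rcases le_total (d i) (d j) with h | h
    · have := Real.exp_le_exp.2 h
      nlinarith
    · have := Real.exp_le_exp.2 h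
      nlinarith
  · exact Finset.sum_nonneg fun i _ => (Real.exp_pos _).le

lemma gm_deriv [Nonempty n] {X A : Matrix n n ℂ} (hX : X.IsHermitian) (hA : A.IsHermitian)
    (hAA : A * A = 1) : ∃ D : ℝ, HasDerivAt (fun t : ℝ => gm (X + t • A) A) (D - gm X A ^ 2) 0 ∧
      0 ≤ D ∧ D ≤ 2 ∧ ∀ c κ : ℝ,
        (∀ x : ℝ, 0 < x → c ≤ Real.tanh x / x + κ * (x * Real.tanh x)) →
        c - κ / 2 * gm X (X - A * X * A) ≤ D := by
  obtain ⟨d, P, q, hP, hPs, hP1, hq, hZ, hT, hI, hC⟩ := sb_spec X A hX hA hAA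
  set Z : ℝ := ∑ i, Real.exp (d i) with hZdef
  have hZp : 0 < Z := Finset.sum_pos (fun i _ => Real.exp_pos _) Finset.univ_nonempty
  have hreal : ∀ t : ℝ, gm (X + t • A) A = (NormedSpace.exp (X + t • A) * A).trace.re /
      (NormedSpace.exp (X + t • A) * 1).trace.re := by
    intro t
    have hXt : (X + t • A).IsHermitian := hX.add (by
      rw [IsHermitian, conjTranspose_smul, hA.eq]; simp)
    obtain ⟨d', P', q', -, -, -, -, hZ', hT', -, -⟩ := sb_spec (X + t • A) A hXt hA hAA
    rw [gm_eq hZ' hT', mul_one, hZ', hT', Complex.ofReal_re, Complex.ofReal_re]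
  have hd1 := sc_tr_deriv X A A
  have hd2 := sc_tr_deriv X A 1
  have hI2 : ∀ s : ℝ, (NormedSpace.exp (s • X) * A * NormedSpace.exp ((1 - s) • X) * 1).trace.re =
      (NormedSpace.exp X * A).trace.re := by
    intro s
    have : NormedSpace.exp ((1 - s) • X) * NormedSpace.exp (s • X) = NormedSpace.exp X := by
      rw [← Matrix.exp_add_of_commute]
      · congr 1; module
      · exact (Commute.refl X).smul_left _ |>.smul_right _
    rw [mul_one, Matrix.trace_mul_comm, ← mul_assoc, this]
  simp only [hI2] at hd2
  rw [intervalIntegral.integral_const, sub_zero, one_smul] at hd2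
  set I : ℝ := ∫ s in (0:ℝ)..1, (NormedSpace.exp (s • X) * A * NormedSpace.exp ((1 - s) • X) * A).trace.re with hIdef
  have hIs : I = ∑ i, ∑ j, P i j * ∫ s in (0:ℝ)..1, Real.exp (s * d i + (1 - s) * d j) := by
    rw [hIdef]
    simp only [hI, Complex.ofReal_re]
    rw [intervalIntegral.integral_finsetSum]
    · refine Finset.sum_congr rfl fun i _ => ?_
      rw [intervalIntegral.integral_finsetSum]
      · refine Finset.sum_congr rfl fun j _ => ?_
        rw [intervalIntegral.integral_const_mul]
      · intro j _
        exact Continuous.intervalIntegrable (by fun_prop) _ _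
    · intro j _
      exact Continuous.intervalIntegrable (by fun_prop) _ _
  have hsumi : ∑ i, ∑ j, P i j * Real.exp (d i) = Z := by
    refine Finset.sum_congr rfl fun i _ => ?_
    rw [← Finset.sum_mul, hP1, one_mul]
  have hsumj : ∑ i, ∑ j, P i j * Real.exp (d j) = Z := by
    rw [Finset.sum_comm, ← hsumi]
    exact Finset.sum_congr rfl fun i _ => Finset.sum_congr rfl fun j _ => by rw [hPs]
  have hZ0 : (NormedSpace.exp (X + (0:ℝ) • A) * 1).trace.re = Z := by
    rw [zero_smul, add_zero, mul_one, hZ, Complex.ofReal_re]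
  refine ⟨I / Z, ?_, ?_, ?_, ?_⟩
  · have h := hd1.div hd2 (by rw [hZ0]; exact hZp.ne')
    have e : (fun t : ℝ => gm (X + t • A) A) = (fun t : ℝ => (NormedSpace.exp (X + t • A) * A).trace.re) /
      (fun t : ℝ => (NormedSpace.exp (X + t • A) * 1).trace.re) := by
      funext t; exact hreal t
    rw [e]
    refine h.congr_deriv ?_
    rw [hZ0, zero_smul, add_zero, gm_eq hZ hT, hT, Complex.ofReal_re]
    field_simp
  · rw [hIs]
    exact div_nonneg (Finset.sum_nonneg fun i _ => Finset.sum_nonneg fun j _ =>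
      mul_nonneg (hP i j) (sb_int_nonneg _ _)) hZp.le
  · rw [div_le_iff₀ hZp, hIs]
    calc _ ≤ ∑ i, ∑ j, P i j * (Real.exp (d i) + Real.exp (d j)) :=
          Finset.sum_le_sum fun i _ => Finset.sum_le_sum fun j _ =>
            mul_le_mul_of_nonneg_left (sb_int_le _ _) (hP i j)
      _ = 2 * Z := by
          simp only [mul_add, Finset.sum_add_distrib]
          rw [hsumi, hsumj]; ring
  · intro c κ hc
    rw [gm_eq hZ hC, sym_sum hPs, le_div_iff₀ hZp, hIs]
    calc _ = ∑ i, ∑ j, P i j * (c * ((Real.exp (d i) + Real.exp (d j)) / 2) -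
              κ * ((Real.exp (d i) - Real.exp (d j)) * (d i - d j) / 4)) := by
          have e1 : ∀ i j, P i j * (c * ((Real.exp (d i) + Real.exp (d j)) / 2) -
              κ * ((Real.exp (d i) - Real.exp (d j)) * (d i - d j) / 4)) =
              c / 2 * (P i j * Real.exp (d i)) + c / 2 * (P i j * Real.exp (d j)) -
              κ / 2 * (P i j * ((Real.exp (d i) - Real.exp (d j)) * (d i - d j) / 2)) := by
            intro i j; ring
          simp only [e1, Finset.sum_sub_distrib, Finset.sum_add_distrib, ← Finset.mul_sum]
          rw [hsumi, hsumj]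
          field_simp
          ring
      _ ≤ _ := Finset.sum_le_sum fun i _ => Finset.sum_le_sum fun j _ =>
            mul_le_mul_of_nonneg_left (sb_int_ge (fun x hx => sa_tanh_le hx) hc _ _) (hP i j)
end
lemma sd_pdf (x : ℝ) : gaussianPDFReal 0 1 x = (√(2 * Real.pi))⁻¹ * Real.exp (-x ^ 2 / 2) := by
  simp [gaussianPDFReal_def]

lemma sd_pdf_deriv (x : ℝ) : HasDerivAt (gaussianPDFReal 0 1) (-(x * gaussianPDFReal 0 1 x)) x := by
  have e : gaussianPDFReal 0 1 = fun x : ℝ => (√(2 * Real.pi))⁻¹ * Real.exp (-x ^ 2 / 2) := by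
    funext x; exact sd_pdf x
  have h2 : HasDerivAt (fun y : ℝ => -y ^ 2 / 2) (-(2 * x) / 2) x := by
    have : HasDerivAt (fun y : ℝ => y ^ 2) (2 * x) x := by simpa using hasDerivAt_pow 2 x
    exact this.neg.div_const 2
  rw [e]
  refine (h2.exp.const_mul _).congr_deriv ?_
  ring

lemma sd_integrable_id : Integrable (fun x : ℝ => x) (gaussianReal 0 1) := by
  have : MemLp id 1 (gaussianReal 0 1) := by
    simpa using memLp_id_gaussianReal (μ := 0) (v := 1) 1
  exact (memLp_one_iff_integrable.1 this)

lemma sd_integrable_iff (f : ℝ → ℝ) : Integrable f (gaussianReal 0 1) ↔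
    Integrable (fun x => gaussianPDFReal 0 1 x * f x) := by
  rw [gaussianReal_of_var_ne_zero 0 one_ne_zero]
  rw [integrable_withDensity_iff_integrable_smul']
  · simp [toReal_gaussianPDF]
  · exact measurable_gaussianPDF 0 1
  · exact Filter.Eventually.of_forall fun x => gaussianPDF_lt_top

lemma sd_stein {F F' : ℝ → ℝ} {C : ℝ} (hF : ∀ t, HasDerivAt F (F' t) t) (hb : ∀ t, |F t| ≤ 1)
    (hb' : ∀ t, |F' t| ≤ C) :
    Integrable F' (gaussianReal 0 1) ∧
    ∫ t, t * F t ∂(gaussianReal 0 1) = ∫ t, F' t ∂(gaussianReal 0 1) := by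
  have hF' : F' = deriv F := by funext t; exact (hF t).deriv.symm
  have hFc : Continuous F := continuous_iff_continuousAt.2 fun t => (hF t).continuousAt
  have hF'm : Measurable F' := by rw [hF']; exact measurable_deriv F
  have i0 : Integrable F (gaussianReal 0 1) :=
    Integrable.of_bound hFc.aestronglyMeasurable 1 (Filter.Eventually.of_forall hb)
  have i1 : Integrable F' (gaussianReal 0 1) :=
    Integrable.of_bound hF'm.aestronglyMeasurable C (Filter.Eventually.of_forall hb')
  have i2 : Integrable (fun t => t * F t) (gaussianReal 0 1) := by
    refine sd_integrable_id.mul_bdd (c := 1) hFc.aestronglyMeasurable ?_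
    exact Filter.Eventually.of_forall hb
  refine ⟨i1, ?_⟩
  have h := integral_mul_deriv_eq_deriv_mul_of_integrable (u := F) (v := gaussianPDFReal 0 1)
    (u' := F') (v' := fun x => -(x * gaussianPDFReal 0 1 x)) (fun x _ => hF x) (fun x _ => sd_pdf_deriv x)
    (by
      refine ((sd_integrable_iff _).1 i2).neg.congr (Filter.Eventually.of_forall fun x => ?_)
      simp only [Pi.mul_apply, Pi.neg_apply]; ring)
    (by
      refine ((sd_integrable_iff _).1 i1).congr (Filter.Eventually.of_forall fun x => ?_)
      simp only [Pi.mul_apply]; ring)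
    (by
      refine ((sd_integrable_iff _).1 i0).congr (Filter.Eventually.of_forall fun x => ?_)
      simp only [Pi.mul_apply]; ring)
  rw [integral_gaussianReal_eq_integral_smul one_ne_zero, integral_gaussianReal_eq_integral_smul one_ne_zero]
  have e1 : ∫ x, gaussianPDFReal 0 1 x • (x * F x) = - ∫ x, F x * -(x * gaussianPDFReal 0 1 x) := by
    rw [← integral_neg]; congr 1; funext x; simp only [smul_eq_mul]; ring
  rw [e1, h, neg_neg]
  congr 1; funext x; simp only [smul_eq_mul]; ring

section
variable {ι : Type*} [Fintype ι] [DecidableEq ι]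

lemma sd_update (γ : Measure ℝ) [IsProbabilityMeasure γ] (i : ι) :
    MeasurePreserving (fun q : (ι → ℝ) × ℝ => Function.update q.1 i q.2)
      ((Measure.pi fun _ : ι => γ).prod γ) (Measure.pi fun _ : ι => γ) := by
  have hm : Measurable (fun q : (ι → ℝ) × ℝ => Function.update q.1 i q.2) := by
    rw [measurable_pi_iff]
    intro j
    by_cases h : j = i
    · subst h; simpa using measurable_snd
    · simp only [Function.update_of_ne h]
      exact (measurable_pi_apply j).comp measurable_fst
  refine ⟨hm, ?_⟩
  symm
  apply Measure.pi_eq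
  intro s hs
  rw [Measure.map_apply hm (MeasurableSet.univ_pi hs)]
  have : (fun q : (ι → ℝ) × ℝ => Function.update q.1 i q.2) ⁻¹' (Set.univ.pi s) =
      (Set.univ.pi (Function.update s i Set.univ)) ×ˢ (s i) := by
    ext ⟨x, t⟩
    simp only [Set.mem_preimage, Set.mem_pi, Set.mem_univ, true_implies, Set.mem_prod]
    constructor
    · intro h
      refine ⟨fun j => ?_, by simpa using h i⟩
      by_cases hj : j = i
      · subst hj; simp
      · have := h j
        rw [Function.update_of_ne hj] at this ⊢
        exact this
    · rintro ⟨h1, h2⟩ j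
      by_cases hj : j = i
      · subst hj; simpa using h2
      · have := h1 j
        rw [Function.update_of_ne hj] at this ⊢
        exact this
  rw [this, Measure.prod_prod, Measure.pi_pi]
  rw [← Finset.mul_prod_erase Finset.univ (fun j => γ (s j)) (Finset.mem_univ i),
    ← Finset.mul_prod_erase Finset.univ (fun j => γ (Function.update s i Set.univ j)) (Finset.mem_univ i)]
  simp only [Function.update_self, measure_univ, one_mul]
  rw [mul_comm]
  congr 1
  refine Finset.prod_congr rfl fun j hj => ?_
  rw [Function.update_of_ne (Finset.ne_of_mem_erase hj)]

lemma sd_integrable_coord (i : ι) :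
    Integrable (fun x : ι → ℝ => x i) (Measure.pi fun _ : ι => gaussianReal 0 1) :=
  (measurePreserving_eval (fun _ : ι => gaussianReal 0 1) i).integrable_comp_of_integrable sd_integrable_id

lemma sd_ibp (i : ι) {F L : (ι → ℝ) → ℝ} {C C' : ℝ} (hFm : Measurable F) (hLm : Measurable L)
    (hF : ∀ x, |F x| ≤ 1) (hL : ∀ x, |L x| ≤ C')
    (hD : ∀ x, ∃ D, HasDerivAt (fun t : ℝ => F (Function.update x i t)) D (x i) ∧ |D| ≤ C ∧ L x ≤ D) :
    ∫ x, L x ∂(Measure.pi fun _ : ι => gaussianReal 0 1) ≤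
      ∫ x, x i * F x ∂(Measure.pi fun _ : ι => gaussianReal 0 1) := by
  set ν := Measure.pi fun _ : ι => gaussianReal 0 1 with hν
  have hmp := sd_update (gaussianReal 0 1) i
  have iL : Integrable L ν :=
    Integrable.of_bound hLm.aestronglyMeasurable C' (Filter.Eventually.of_forall hL)
  have iF : Integrable (fun x => x i * F x) ν :=
    (sd_integrable_coord i).mul_bdd (c := 1) hFm.aestronglyMeasurable (Filter.Eventually.of_forall hF)
  choose D hD1 hD2 hD3 using hD
  have key : ∀ f : (ι → ℝ) → ℝ, Integrable f ν → 
      Integrable (fun q : (ι → ℝ) × ℝ => f (Function.update q.1 i q.2)) (ν.prod (gaussianReal 0 1)) ∧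
      ∫ x, f x ∂ν = ∫ x, ∫ t, f (Function.update x i t) ∂(gaussianReal 0 1) ∂ν := by
    intro f hf
    have h1 : Integrable (fun q : (ι → ℝ) × ℝ => f (Function.update q.1 i q.2)) (ν.prod (gaussianReal 0 1)) :=
      hmp.integrable_comp_of_integrable hf
    refine ⟨h1, ?_⟩
    have h2 := integral_map (μ := ν.prod (gaussianReal 0 1)) hmp.measurable.aemeasurable
      (f := f) (by rw [hmp.map_eq]; exact hf.aestronglyMeasurable)
    rw [hmp.map_eq] at h2
    rw [h2, integral_prod _ h1]
  obtain ⟨p1, e1⟩ := key L iL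
  obtain ⟨p2, e2⟩ := key _ iF
  rw [e1, e2]
  refine integral_mono p1.integral_prod_left p2.integral_prod_left fun x => ?_
  simp only [Function.update_self]
  have hder : ∀ t, HasDerivAt (fun t => F (Function.update x i t)) (D (Function.update x i t)) t := by
    intro t
    have := hD1 (Function.update x i t)
    simpa using this
  obtain ⟨i1, e⟩ := sd_stein hder (fun t => hF _) (fun t => hD2 _)
  rw [e]
  refine integral_mono ?_ i1 fun t => hD3 _
  refine Integrable.of_bound (Measurable.aestronglyMeasurable ?_) C' (Filter.Eventually.of_forall fun t => hL _)
  exact hLm.comp (measurable_update x)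

end


/-- sign product -/
def aS {N : ℕ} (s : Finset (Fin N)) (σ : Conf N) : ℂ := ∏ j ∈ s, (if σ j = 0 then (1 : ℂ) else -1)

def flp {N : ℕ} (j : Fin N) (σ : Conf N) : Conf N := Function.update σ j (1 - σ j)

lemma flp_flp {N : ℕ} (j : Fin N) (σ : Conf N) : flp j (flp j σ) = σ := by
  simp [flp]

lemma SzProd_eq {N : ℕ} (s : Finset (Fin N)) : SzProd N s = diagonal (aS s) := rfl

lemma Sx_apply {N : ℕ} (j : Fin N) (σ τ : Conf N) : Sx N j σ τ = if τ = flp j σ then 1 else 0 := rfl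

lemma sgn_sq (x : Fin 2) : (if x = 0 then (1 : ℂ) else -1) * (if x = 0 then (1 : ℂ) else -1) = 1 := by
  split_ifs <;> norm_num

lemma aS_sq {N : ℕ} (s : Finset (Fin N)) (σ : Conf N) : aS s σ * aS s σ = 1 := by
  rw [aS, ← Finset.prod_mul_distrib]
  exact Finset.prod_eq_one fun j _ => sgn_sq _

lemma aS_flp {N : ℕ} (s : Finset (Fin N)) (j : Fin N) (σ : Conf N) :
    aS s (flp j σ) = if j ∈ s then - aS s σ else aS s σ := by
  split_ifs with h
  · rw [aS, aS, ← Finset.mul_prod_erase s _ h, ← Finset.mul_prod_erase s _ h, ← neg_mul]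
    congr 1
    · simp only [flp, Function.update_self]
      generalize σ j = x
      revert x
      intro x
      fin_cases x <;> simp
    · refine Finset.prod_congr rfl fun k hk => ?_
      rw [flp, Function.update_of_ne (Finset.ne_of_mem_erase hk)]
  · refine Finset.prod_congr rfl fun k hk => ?_
    rw [flp, Function.update_of_ne]
    rintro rfl
    exact h hk

lemma aS_star {N : ℕ} (s : Finset (Fin N)) (σ : Conf N) : star (aS s σ) = aS s σ := by
  rw [aS, star_prod]
  refine Finset.prod_congr rfl fun k _ => ?_
  split_ifs <;> simp

lemma SzProd_herm {N : ℕ} (s : Finset (Fin N)) : (SzProd N s).IsHermitian := by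
  rw [SzProd_eq, IsHermitian, diagonal_conjTranspose]
  congr 1
  funext σ
  exact aS_star s σ

lemma SzProd_sq {N : ℕ} (s : Finset (Fin N)) : SzProd N s * SzProd N s = 1 := by
  rw [SzProd_eq, diagonal_mul_diagonal, ← diagonal_one]
  congr 1
  funext σ
  exact aS_sq s σ

lemma flp_iff {N : ℕ} (j : Fin N) (σ τ : Conf N) : τ = flp j σ ↔ σ = flp j τ := by
  constructor
  · rintro rfl; rw [flp_flp]
  · rintro rfl; rw [flp_flp]

lemma Sx_herm {N : ℕ} (j : Fin N) : (Sx N j).IsHermitian := by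
  ext σ τ
  rw [conjTranspose_apply, Sx_apply, Sx_apply]
  by_cases h : τ = flp j σ
  · rw [if_pos h, if_pos ((flp_iff j σ τ).1 h)]; simp
  · rw [if_neg h, if_neg (fun h' => h ((flp_iff j σ τ).2 h'))]; simp

lemma Sx_sq {N : ℕ} (j : Fin N) : Sx N j * Sx N j = 1 := by
  ext σ τ
  rw [Matrix.mul_apply]
  simp only [Sx_apply, ite_mul, one_mul, zero_mul, Finset.sum_ite_eq', Finset.mem_univ, if_true, flp_flp]
  rw [Matrix.one_apply]
  simp only [eq_comm]

lemma SzProd_Sx {N : ℕ} (s : Finset (Fin N)) (j : Fin N) :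
    SzProd N s * Sx N j * SzProd N s = if j ∈ s then - Sx N j else Sx N j := by
  have key : ∀ σ τ, (SzProd N s * Sx N j * SzProd N s) σ τ =
      if j ∈ s then - Sx N j σ τ else Sx N j σ τ := by
    intro σ τ
    rw [SzProd_eq, mul_diagonal, diagonal_mul, Sx_apply]
    by_cases h : τ = flp j σ
    · subst h
      rw [if_pos rfl, aS_flp]
      split_ifs
      · rw [mul_one, mul_neg, aS_sq]
      · rw [mul_one, aS_sq]
    · rw [if_neg h]; simp
  ext σ τ
  rw [key]
  split_ifs <;> simp

/-- index set of couplings -/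
abbrev IX (N p : ℕ) := {t : Finset (Fin N) // t.card = p}

def ext0 {N p : ℕ} (x : IX N p → ℝ) (s : Finset (Fin N)) : ℝ := if h : s.card = p then x ⟨s, h⟩ else 0

def cN (N p : ℕ) : ℝ := Real.sqrt ((Nat.factorial p : ℝ) / (2 * (N : ℝ) ^ (p - 1)))

lemma UNp_eq {N p : ℕ} (g : Finset (Fin N) → ℝ) :
    UNp N p g = -(∑ s : IX N p, (cN N p * g s.1) • SzProd N s.1) := by
  rw [UNp, neg_smul]
  congr 1
  rw [← Finset.sum_filter, Finset.smul_sum]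
  change _ = ∑ s : IX N p, (fun t : Finset (Fin N) => (cN N p * g t) • SzProd N t) s.1
  rw [← Finset.sum_subtype (Finset.univ.filter fun t : Finset (Fin N) => t.card = p) (by simp)
    (fun t : Finset (Fin N) => (cN N p * g t) • SzProd N t)]
  refine Finset.sum_congr rfl fun s _ => ?_
  rw [smul_smul]
  rfl

/-- `-β H` as a function of the couplings -/
def Xm (N p : ℕ) (β J b : ℝ) (x : IX N p → ℝ) : Matrix (Conf N) (Conf N) ℂ :=
  ∑ s : IX N p, (β * J * cN N p * x s) • SzProd N s.1 + ∑ j : Fin N, (β * b) • Sx N j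

lemma Xm_eq {N p : ℕ} (β J b : ℝ) (g : Finset (Fin N) → ℝ) :
    (-β) • HNp N p J b g = Xm N p β J b (fun s => g s.1) := by
  rw [HNp, UNp_eq, Xm, ← Finset.smul_sum]
  have : ∑ s : IX N p, (β * J * cN N p * g s.1) • SzProd N s.1 =
      (β * J) • ∑ s : IX N p, (cN N p * g s.1) • SzProd N s.1 := by
    rw [Finset.smul_sum]
    refine Finset.sum_congr rfl fun s _ => ?_
    rw [smul_smul]; congr 1; ring
  rw [this]
  module

lemma smul_herm {n : Type*} {A : Matrix n n ℂ} (hA : A.IsHermitian) (r : ℝ) : (r • A).IsHermitian := by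
  rw [IsHermitian, conjTranspose_smul, hA.eq]; simp

lemma sum_herm {n ι : Type*} (s : Finset ι) {A : ι → Matrix n n ℂ} (hA : ∀ i, (A i).IsHermitian) :
    (∑ i ∈ s, A i).IsHermitian := by
  rw [IsHermitian, conjTranspose_sum]
  exact Finset.sum_congr rfl fun i _ => (hA i).eq

lemma Xm_herm {N p : ℕ} (β J b : ℝ) (x : IX N p → ℝ) : (Xm N p β J b x).IsHermitian := by
  unfold Xm
  apply IsHermitian.add
  · exact sum_herm _ fun s => smul_herm (SzProd_herm s.1) _
  · exact sum_herm _ fun j => smul_herm (Sx_herm j) _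

lemma Xm_cont {N p : ℕ} (β J b : ℝ) : Continuous (Xm N p β J b) := by
  unfold Xm
  fun_prop

lemma Xm_update {N p : ℕ} (β J b : ℝ) (x : IX N p → ℝ) (s : IX N p) (t : ℝ) :
    Xm N p β J b (Function.update x s t) =
      Xm N p β J b x + (β * J * cN N p * (t - x s)) • SzProd N s.1 := by
  rw [Xm, Xm, add_right_comm]
  congr 1
  rw [← Finset.add_sum_erase _ _ (Finset.mem_univ s),
    ← Finset.add_sum_erase _ (fun s : IX N p => (β * J * cN N p * x s) • SzProd N s.1) (Finset.mem_univ s)]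
  have : ∑ u ∈ Finset.univ.erase s, (β * J * cN N p * Function.update x s t u) • SzProd N u.1 =
      ∑ u ∈ Finset.univ.erase s, (β * J * cN N p * x u) • SzProd N u.1 := by
    refine Finset.sum_congr rfl fun u hu => ?_
    rw [Function.update_of_ne (Finset.ne_of_mem_erase hu)]
  rw [this, Function.update_self]
  module

lemma Xm_comm {N p : ℕ} (β J b : ℝ) (x : IX N p → ℝ) (s : Finset (Fin N)) :
    Xm N p β J b x - SzProd N s * Xm N p β J b x * SzProd N s =
      ∑ j ∈ s, (2 * (β * b)) • Sx N j := by
  have h1 : SzProd N s * (∑ u : IX N p, (β * J * cN N p * x u) • SzProd N u.1) * SzProd N s =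
      ∑ u : IX N p, (β * J * cN N p * x u) • SzProd N u.1 := by
    rw [Finset.mul_sum, Finset.sum_mul]
    refine Finset.sum_congr rfl fun u _ => ?_
    rw [mul_smul_comm, smul_mul_assoc]
    congr 1
    have : SzProd N s * SzProd N u.1 = SzProd N u.1 * SzProd N s := by
      rw [SzProd_eq, SzProd_eq, diagonal_mul_diagonal, diagonal_mul_diagonal]
      congr 1; funext σ; ring
    rw [this, mul_assoc, SzProd_sq, mul_one]
  rw [Xm, mul_add, add_mul, h1, add_sub_add_left_eq_sub, Finset.mul_sum, Finset.sum_mul,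
    ← Finset.sum_sub_distrib]
  rw [← Finset.sum_filter_add_sum_filter_not Finset.univ (fun j => j ∈ s)]
  have h2 : ∑ j ∈ Finset.univ.filter (fun j => ¬ j ∈ s), ((β * b) • Sx N j - SzProd N s * (β * b) • Sx N j * SzProd N s) = 0 := by
    refine Finset.sum_eq_zero fun j hj => ?_
    rw [mul_smul_comm, smul_mul_assoc, SzProd_Sx, if_neg (Finset.mem_filter.1 hj).2, sub_self]
  rw [h2, add_zero, Finset.filter_mem_eq_inter, Finset.univ_inter]
  refine Finset.sum_congr rfl fun j hj => ?_
  rw [mul_smul_comm, smul_mul_assoc, SzProd_Sx, if_pos hj]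
  module

section
variable {n : Type*} [Fintype n] [DecidableEq n]

lemma gm_sum {ι : Type*} (s : Finset ι) (r : ι → ℝ) (X : Matrix n n ℂ) (A : ι → Matrix n n ℂ) :
    gm X (∑ i ∈ s, r i • A i) = ∑ i ∈ s, r i * gm X (A i) := by
  simp only [gm]
  rw [Finset.mul_sum, trace_sum, Finset.sum_div, Complex.re_sum]
  refine Finset.sum_congr rfl fun i _ => ?_
  rw [mul_smul_comm, trace_smul, Complex.real_smul, mul_div_assoc, Complex.re_ofReal_mul]

lemma gm_neg (X A : Matrix n n ℂ) : gm X (-A) = - gm X A := by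
  simp [gm, neg_div]

lemma gm_cont [Nonempty n] {α : Type*} [TopologicalSpace α] {f : α → Matrix n n ℂ} (hf : Continuous f)
    (hH : ∀ x, (f x).IsHermitian) (A : Matrix n n ℂ) : Continuous fun x => gm (f x) A := by
  have he := (sc_exp_continuous (n := n)).comp hf
  unfold gm
  refine Complex.continuous_re.comp (Continuous.div ?_ ?_ ?_)
  · exact (he.matrix_mul continuous_const).matrix_trace
  · exact he.matrix_trace
  · intro x
    obtain ⟨d, P, q, -, -, -, -, hZ, -⟩ := sb_spec (f x) 1 (hH x) isHermitian_one (one_mul 1)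
    rw [hZ]
    have hZp : 0 < ∑ i, Real.exp (d i) := Finset.sum_pos (fun i _ => Real.exp_pos _) Finset.univ_nonempty
    exact_mod_cast hZp.ne'

end


section
variable {n m : Type*} [Fintype n] [DecidableEq n] [Fintype m] [DecidableEq m]

lemma exp_map_hom (f : Matrix n n ℂ →+* Matrix m m ℂ) (hf : Continuous f) (X : Matrix n n ℂ) :
    f (NormedSpace.exp X) = NormedSpace.exp (f X) := by
  let _ : NormedRing (Matrix n n ℂ) := Matrix.linftyOpNormedRing
  let _ : NormedAlgebra ℝ (Matrix n n ℂ) := Matrix.linftyOpNormedAlgebra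
  let _ : NormedAlgebra ℚ (Matrix n n ℂ) := NormedAlgebra.restrictScalars ℚ ℝ _
  let _ : NormedRing (Matrix m m ℂ) := Matrix.linftyOpNormedRing
  let _ : NormedAlgebra ℝ (Matrix m m ℂ) := Matrix.linftyOpNormedAlgebra
  let _ : NormedAlgebra ℚ (Matrix m m ℂ) := NormedAlgebra.restrictScalars ℚ ℝ _
  exact NormedSpace.map_exp f hf X

lemma exp_submatrix (e : n ≃ m) (X : Matrix m m ℂ) :
    NormedSpace.exp (X.submatrix e e) = (NormedSpace.exp X).submatrix e e := by
  let f : Matrix m m ℂ →+* Matrix n n ℂ :=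
    { toFun := fun M => M.submatrix e e
      map_one' := by simp
      map_mul' := fun A B => by rw [Matrix.submatrix_mul_equiv]
      map_zero' := by simp
      map_add' := fun A B => rfl }
  exact (exp_map_hom f (by change Continuous fun M : Matrix m m ℂ => M.submatrix e e; fun_prop) X).symm

lemma trace_submatrix (e : n ≃ m) (X : Matrix m m ℂ) : (X.submatrix e e).trace = X.trace := by
  simp only [trace, diag_apply, submatrix_apply]
  exact Equiv.sum_comp e (fun i => X i i)

lemma gm_submatrix (e : n ≃ m) (X A : Matrix m m ℂ) : gm (X.submatrix e e) (A.submatrix e e) = gm X A := by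
  rw [gm, gm, exp_submatrix, Matrix.submatrix_mul_equiv, trace_submatrix, trace_submatrix]

lemma exp_kron (A : Matrix n n ℂ) (B : Matrix m m ℂ) :
    NormedSpace.exp (A ⊗ₖ (1 : Matrix m m ℂ) + (1 : Matrix n n ℂ) ⊗ₖ B) =
      NormedSpace.exp A ⊗ₖ NormedSpace.exp B := by
  let f : Matrix n n ℂ →+* Matrix (n × m) (n × m) ℂ :=
    { toFun := fun M => M ⊗ₖ (1 : Matrix m m ℂ)
      map_one' := by simp
      map_mul' := fun A B => by rw [← Matrix.mul_kronecker_mul, one_mul]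
      map_zero' := by simp
      map_add' := fun A B => by rw [Matrix.add_kronecker] }
  let g : Matrix m m ℂ →+* Matrix (n × m) (n × m) ℂ :=
    { toFun := fun M => (1 : Matrix n n ℂ) ⊗ₖ M
      map_one' := by simp
      map_mul' := fun A B => by rw [← Matrix.mul_kronecker_mul, one_mul]
      map_zero' := by simp
      map_add' := fun A B => by rw [Matrix.kronecker_add] }
  have hf : Continuous f := by
    change Continuous fun M : Matrix n n ℂ => M ⊗ₖ (1 : Matrix m m ℂ)
    refine continuous_matrix fun i j => ?_
    simp only [Matrix.kroneckerMap_apply]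
    fun_prop
  have hg : Continuous g := by
    change Continuous fun M : Matrix m m ℂ => (1 : Matrix n n ℂ) ⊗ₖ M
    refine continuous_matrix fun i j => ?_
    simp only [Matrix.kroneckerMap_apply]
    fun_prop
  rw [Matrix.exp_add_of_commute]
  · have h1 : NormedSpace.exp (A ⊗ₖ (1 : Matrix m m ℂ)) = NormedSpace.exp A ⊗ₖ (1 : Matrix m m ℂ) :=
      (exp_map_hom f hf A).symm
    have h2 : NormedSpace.exp ((1 : Matrix n n ℂ) ⊗ₖ B) = (1 : Matrix n n ℂ) ⊗ₖ NormedSpace.exp B :=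
      (exp_map_hom g hg B).symm
    rw [h1, h2, ← Matrix.mul_kronecker_mul, one_mul, mul_one]
  · rw [Commute, SemiconjBy, ← Matrix.mul_kronecker_mul, ← Matrix.mul_kronecker_mul, one_mul, mul_one,
      one_mul, mul_one]
end

/-! permutation symmetry -/

def confPerm {N : ℕ} (π : Equiv.Perm (Fin N)) : Conf N ≃ Conf N where
  toFun σ := fun j => σ (π j)
  invFun σ := fun j => σ (π.symm j)
  left_inv σ := by funext j; simp
  right_inv σ := by funext j; simp

lemma Sx_perm {N : ℕ} (π : Equiv.Perm (Fin N)) (j : Fin N) :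
    (Sx N j).submatrix (confPerm π) (confPerm π) = Sx N (π j) := by
  ext σ τ
  rw [submatrix_apply, Sx_apply, Sx_apply]
  have : flp j (confPerm π σ) = confPerm π (flp (π j) σ) := by
    funext k
    simp only [flp, confPerm, Equiv.coe_fn_mk]
    by_cases h : k = j
    · subst h; simp
    · rw [Function.update_of_ne h, Function.update_of_ne (fun h' => h (π.injective h'))]
  rw [this]
  simp only [(confPerm π).injective.eq_iff]

lemma SzProd_perm {N : ℕ} (π : Equiv.Perm (Fin N)) (s : Finset (Fin N)) :
    (SzProd N s).submatrix (confPerm π) (confPerm π) = SzProd N (s.map π.toEmbedding) := by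
  rw [SzProd_eq, SzProd_eq, submatrix_diagonal _ _ (confPerm π).injective]
  congr 1
  funext σ
  simp [aS, Finset.prod_map, confPerm]

def ixPerm {N p : ℕ} (π : Equiv.Perm (Fin N)) : IX N p ≃ IX N p where
  toFun s := ⟨s.1.map π.toEmbedding, by rw [Finset.card_map]; exact s.2⟩
  invFun s := ⟨s.1.map π.symm.toEmbedding, by rw [Finset.card_map]; exact s.2⟩
  left_inv s := by ext j; simp [Finset.mem_map]
  right_inv s := by ext j; simp [Finset.mem_map]

lemma Xm_perm {N p : ℕ} (β J b : ℝ) (π : Equiv.Perm (Fin N)) (x : IX N p → ℝ) :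
    (Xm N p β J b (fun s => x (ixPerm π s))).submatrix (confPerm π) (confPerm π) = Xm N p β J b x := by
  have hs : ∀ {ι : Type} (t : Finset ι) (r : ι → ℝ) (A : ι → Matrix (Conf N) (Conf N) ℂ),
      (∑ i ∈ t, r i • A i).submatrix (confPerm π) (confPerm π) =
        ∑ i ∈ t, r i • (A i).submatrix (confPerm π) (confPerm π) := by
    intro ι t r A
    ext σ τ
    simp [Matrix.sum_apply]
  rw [Xm, Xm, Matrix.submatrix_add, Pi.add_apply, Pi.add_apply, hs, hs]
  congr 1
  · simp only [SzProd_perm]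
    exact Equiv.sum_comp (ixPerm π) (fun s : IX N p => (β * J * cN N p * x s) • SzProd N s.1)
  · simp only [Sx_perm]
    exact Equiv.sum_comp π (fun j => (β * b) • Sx N j)

def gam (N p : ℕ) : Measure (IX N p → ℝ) := Measure.pi fun _ : IX N p => gaussianReal 0 1

instance (N p : ℕ) : IsProbabilityMeasure (gam N p) := by unfold gam; infer_instance

lemma gam_perm {N p : ℕ} (π : Equiv.Perm (Fin N)) (f : (IX N p → ℝ) → ℝ) :
    ∫ x, f (fun s => x (ixPerm π s)) ∂(gam N p) = ∫ x, f x ∂(gam N p) := by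
  have h := (measurePreserving_piCongrLeft (fun _ : IX N p => gaussianReal 0 1) (ixPerm π).symm)
  have h2 := h.integral_comp' (g := f)
  unfold gam
  rw [← h2]
  congr 1
  funext x
  congr 1
  funext s
  have := Equiv.piCongrLeft_apply_apply (P := fun _ : IX N p => ℝ) (ixPerm π).symm x (ixPerm π s)
  rw [Equiv.symm_apply_apply] at this
  exact this.symm

lemma gm_perm {N p : ℕ} (β J b : ℝ) (π : Equiv.Perm (Fin N)) (x : IX N p → ℝ) (j : Fin N) :
    gm (Xm N p β J b (fun s => x (ixPerm π s))) (Sx N j) = gm (Xm N p β J b x) (Sx N (π j)) := by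
  rw [← gm_submatrix (confPerm π), Xm_perm, Sx_perm]

def SxF (N p : ℕ) (β J b : ℝ) (j : Fin N) (x : IX N p → ℝ) : ℝ := gm (Xm N p β J b x) (Sx N j)

lemma mean_Sx_eq {N p : ℕ} (β J b : ℝ) (j k : Fin N) :
    ∫ x, SxF N p β J b j x ∂(gam N p) = ∫ x, SxF N p β J b k x ∂(gam N p) := by
  have h1 := gam_perm (Equiv.swap j k) (SxF N p β J b j)
  rw [← h1]
  refine integral_congr_ae (Filter.Eventually.of_forall fun x => ?_)
  have h2 := gm_perm β J b (Equiv.swap j k) x j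
  rw [Equiv.swap_apply_left] at h2
  exact h2

/-! overlap -/

lemma RN_eq (N : ℕ) : RN N = diagonal (fun q : Conf N × Conf N =>
    ((N : ℂ)⁻¹ * ∑ j, (if q.1 j = 0 then (1 : ℂ) else -1) * (if q.2 j = 0 then (1 : ℂ) else -1))) := by
  have : ∀ j, Sz N j ⊗ₖ Sz N j = diagonal (fun q : Conf N × Conf N =>
      (if q.1 j = 0 then (1 : ℂ) else -1) * (if q.2 j = 0 then (1 : ℂ) else -1)) := by
    intro j
    rw [Sz, Matrix.diagonal_kronecker_diagonal]
  rw [RN]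
  ext q r
  simp only [this, Matrix.smul_apply, Matrix.sum_apply]
  by_cases h : q = r
  · subst h; simp
  · simp [diagonal_apply_ne _ h]

def bF {N p : ℕ} (f : Fin p → Fin N) (σ : Conf N) : ℂ := ∏ i, (if σ (f i) = 0 then (1 : ℂ) else -1)

lemma bF_herm {N p : ℕ} (f : Fin p → Fin N) : (diagonal (bF f)).IsHermitian := by
  rw [IsHermitian, diagonal_conjTranspose]
  congr 1
  funext σ
  rw [Pi.star_apply, bF, star_prod]
  refine Finset.prod_congr rfl fun k _ => ?_
  split_ifs <;> simp

lemma bF_sq {N p : ℕ} (f : Fin p → Fin N) : diagonal (bF f) * diagonal (bF f) = 1 := by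
  rw [diagonal_mul_diagonal, ← diagonal_one]
  congr 1
  funext σ
  rw [bF, ← Finset.prod_mul_distrib]
  exact Finset.prod_eq_one fun j _ => sgn_sq _

lemma RN_pow (N p : ℕ) : RN N ^ p = diagonal (fun q : Conf N × Conf N =>
    ((N : ℂ)⁻¹ ^ p * ∑ f : Fin p → Fin N, bF f q.1 * bF f q.2)) := by
  rw [RN_eq, diagonal_pow]
  congr 1
  funext q
  rw [Pi.pow_apply, mul_pow]
  congr 1
  rw [Fintype.sum_pow]
  refine Finset.sum_congr rfl fun f _ => ?_
  rw [bF, bF, Finset.prod_mul_distrib]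

lemma gibbs_R {N p : ℕ} (β J b : ℝ) (g : Finset (Fin N) → ℝ) :
    gibbs β (Hdup N p J b g) (RN N ^ p) = ((N : ℝ)⁻¹) ^ p *
      ∑ f : Fin p → Fin N, (gm (Xm N p β J b fun s => g s.1) (diagonal (bF f))) ^ 2 := by
  set X := Xm N p β J b fun s => g s.1 with hX
  have hXh : X.IsHermitian := Xm_herm _ _ _ _
  have hH : (-β) • Hdup N p J b g = X ⊗ₖ (1 : Matrix (Conf N) (Conf N) ℂ) + (1 : Matrix (Conf N) (Conf N) ℂ) ⊗ₖ X := by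
    rw [Hdup, smul_add, ← Matrix.smul_kronecker, ← Matrix.kronecker_smul, Xm_eq]
  rw [gibbs, hH, exp_kron, RN_pow]
  set E := NormedSpace.exp X with hE
  obtain ⟨d, P, q, -, -, -, -, hZ, -⟩ := sb_spec X 1 hXh isHermitian_one (one_mul 1)
  set Z := ∑ i, Real.exp (d i)
  have hreal : ∀ f : Fin p → Fin N, ∃ a : ℝ, (E * diagonal (bF f)).trace = (a : ℂ) := by
    intro f
    obtain ⟨d, P, q, -, -, -, -, -, hT, -⟩ := sb_spec X (diagonal (bF f)) hXh (bF_herm f) (bF_sq f)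
    exact ⟨_, hT⟩
  choose a ha using hreal
  have hgm : ∀ f, gm X (diagonal (bF f)) = a f / Z := fun f => gm_eq hZ (ha f)
  simp only [hgm]
  rw [Matrix.trace_kronecker, hZ]
  have htr : (E ⊗ₖ E * diagonal (fun q : Conf N × Conf N =>
    ((N : ℂ)⁻¹ ^ p * ∑ f : Fin p → Fin N, bF f q.1 * bF f q.2))).trace =
      (((N : ℝ)⁻¹ ^ p * ∑ f, a f ^ 2 : ℝ) : ℂ) := by
    have ha' : ∀ f, ∑ σ, E σ σ * bF f σ = (a f : ℂ) := by
      intro f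
      rw [← ha f, trace]
      refine Finset.sum_congr rfl fun σ _ => ?_
      rw [diag_apply, mul_diagonal]
    have h1 : ∀ q : Conf N × Conf N, (E ⊗ₖ E * diagonal (fun q : Conf N × Conf N =>
        ((N : ℂ)⁻¹ ^ p * ∑ f : Fin p → Fin N, bF f q.1 * bF f q.2))).diag q =
        ∑ f : Fin p → Fin N, (N : ℂ)⁻¹ ^ p * ((E q.1 q.1 * bF f q.1) * (E q.2 q.2 * bF f q.2)) := by
      intro q
      rw [diag_apply, mul_diagonal, Matrix.kroneckerMap_apply, Finset.mul_sum, Finset.mul_sum]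
      refine Finset.sum_congr rfl fun f _ => ?_
      ring
    rw [trace, Finset.sum_congr rfl fun q _ => h1 q, Finset.sum_comm]
    push_cast
    rw [Finset.mul_sum]
    refine Finset.sum_congr rfl fun f _ => ?_
    rw [← Finset.mul_sum, Fintype.sum_prod_type, sq, ← ha', Finset.sum_mul_sum]
  rw [htr, ← Complex.ofReal_mul, ← Complex.ofReal_div, Complex.ofReal_re, mul_div_assoc, Finset.sum_div]
  congr 1
  refine Finset.sum_congr rfl fun f _ => ?_
  rw [div_pow, sq Z]

lemma sum_f_ge {N p : ℕ} (h : (Fin p → Fin N) → ℝ) (h0 : ∀ f, 0 ≤ h f) (k : IX N p → ℝ)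
    (hk : ∀ (s : IX N p) (f : Fin p → Fin N), Function.Injective f → Finset.univ.image f = s.1 → h f = k s) :
    (p.factorial : ℝ) * ∑ s, k s ≤ ∑ f, h f := by
  let φ : IX N p × Equiv.Perm (Fin p) → (Fin p → Fin N) := fun q i => q.1.1.orderEmbOfFin q.1.2 (q.2 i)
  have hφi : ∀ q, Function.Injective (φ q) := fun q =>
    (q.1.1.orderEmbOfFin q.1.2).injective.comp q.2.injective
  have hφim : ∀ q, Finset.univ.image (φ q) = q.1.1 := by
    intro q
    apply Finset.eq_of_subset_of_card_le
    · intro x hx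
      obtain ⟨i, -, rfl⟩ := Finset.mem_image.1 hx
      exact Finset.orderEmbOfFin_mem _ _ _
    · rw [Finset.card_image_of_injective _ (hφi q), Finset.card_univ, Fintype.card_fin, q.1.2]
  have hinj : Function.Injective φ := by
    rintro ⟨s, π⟩ ⟨s', π'⟩ he
    have h1 : s = s' := by
      apply Subtype.ext
      rw [← hφim (s, π), ← hφim (s', π'), he]
    subst h1
    have h2 : π = π' := by
      ext i
      have := congrFun he i
      exact congrArg Fin.val ((s.1.orderEmbOfFin s.2).injective this)
    rw [h2]
  calc (p.factorial : ℝ) * ∑ s, k s = ∑ q : IX N p × Equiv.Perm (Fin p), h (φ q) := by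
        have : ∀ q : IX N p × Equiv.Perm (Fin p), h (φ q) = k q.1 := fun q =>
          hk q.1 (φ q) (hφi q) (hφim q)
        simp only [this]
        rw [Fintype.sum_prod_type, Finset.mul_sum]
        refine Finset.sum_congr rfl fun s _ => ?_
        simp [Fintype.card_perm]
    _ = ∑ f ∈ Finset.univ.map ⟨φ, hinj⟩, h f := by rw [Finset.sum_map]; rfl
    _ ≤ ∑ f, h f := Finset.sum_le_sum_of_subset_of_nonneg (Finset.subset_univ _) fun f _ _ => h0 f

lemma gibbs_R_ge {N p : ℕ} (β J b : ℝ) (g : Finset (Fin N) → ℝ) :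
    ((N : ℝ)⁻¹) ^ p * ((p.factorial : ℝ) * ∑ s : IX N p, (gm (Xm N p β J b fun s => g s.1) (SzProd N s.1)) ^ 2) ≤
    gibbs β (Hdup N p J b g) (RN N ^ p) := by
  rw [gibbs_R]
  refine mul_le_mul_of_nonneg_left ?_ (by positivity)
  refine sum_f_ge _ (fun f => sq_nonneg _) _ ?_
  intro s f hf him
  rw [SzProd_eq]
  congr 3
  funext σ
  rw [aS, bF, ← him, Finset.prod_image (fun i _ j _ hij => hf hij)]


/-! assembling -/

def SzF (N p : ℕ) (β J b : ℝ) (s : Finset (Fin N)) (x : IX N p → ℝ) : ℝ :=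
  gm (Xm N p β J b x) (SzProd N s)

lemma SxF_cont {N p : ℕ} (β J b : ℝ) (j : Fin N) : Continuous (SxF N p β J b j) :=
  gm_cont (Xm_cont β J b) (fun x => Xm_herm β J b x) _

lemma SzF_cont {N p : ℕ} (β J b : ℝ) (s : Finset (Fin N)) : Continuous (SzF N p β J b s) :=
  gm_cont (Xm_cont β J b) (fun x => Xm_herm β J b x) _

lemma SxF_abs {N p : ℕ} (β J b : ℝ) (j : Fin N) (x : IX N p → ℝ) : |SxF N p β J b j x| ≤ 1 :=
  gm_abs_le (Xm_herm β J b x) (Sx_herm j) (Sx_sq j)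

lemma SzF_abs {N p : ℕ} (β J b : ℝ) (s : Finset (Fin N)) (x : IX N p → ℝ) : |SzF N p β J b s x| ≤ 1 :=
  gm_abs_le (Xm_herm β J b x) (SzProd_herm s) (SzProd_sq s)

lemma cont_int {N p : ℕ} {f : (IX N p → ℝ) → ℝ} (hf : Continuous f) {C : ℝ} (hC : ∀ x, |f x| ≤ C) :
    Integrable f (gam N p) :=
  Integrable.of_bound hf.aestronglyMeasurable C (Filter.Eventually.of_forall hC)

lemma SxF_int {N p : ℕ} (β J b : ℝ) (j : Fin N) : Integrable (SxF N p β J b j) (gam N p) :=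
  cont_int (SxF_cont β J b j) (SxF_abs β J b j)

lemma SzF_sq_int {N p : ℕ} (β J b : ℝ) (s : Finset (Fin N)) :
    Integrable (fun x => SzF N p β J b s x ^ 2) (gam N p) := by
  refine cont_int (C := 1) ((SzF_cont β J b s).pow 2) fun x => ?_
  rw [abs_pow]
  exact pow_le_one₀ (abs_nonneg _) (SzF_abs β J b s x)

lemma comm_eq {N p : ℕ} (β J b : ℝ) (s : Finset (Fin N)) (x : IX N p → ℝ) :
    gm (Xm N p β J b x) (Xm N p β J b x - SzProd N s * Xm N p β J b x * SzProd N s) =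
      ∑ j ∈ s, (2 * (β * b)) * SxF N p β J b j x := by
  rw [Xm_comm, gm_sum]
  rfl

lemma mean_comm {N p : ℕ} (β J b : ℝ) (s : IX N p) (j0 : Fin N) :
    ∫ x, (∑ j ∈ s.1, (2 * (β * b)) * SxF N p β J b j x) ∂(gam N p) =
      2 * (p * β * b * ∫ x, SxF N p β J b j0 x ∂(gam N p)) := by
  rw [integral_finsetSum _ fun j _ => (SxF_int β J b j).const_mul _]
  have : ∀ j ∈ s.1, ∫ x, (2 * (β * b)) * SxF N p β J b j x ∂(gam N p) =
      (2 * (β * b)) * ∫ x, SxF N p β J b j0 x ∂(gam N p) := by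
    intro j _
    rw [integral_const_mul, mean_Sx_eq β J b j j0]
  rw [Finset.sum_congr rfl this, Finset.sum_const, s.2, nsmul_eq_mul]
  ring

lemma t0_nonneg {N p : ℕ} (β J b : ℝ) (s : IX N p) (j0 : Fin N) :
    0 ≤ p * β * b * ∫ x, SxF N p β J b j0 x ∂(gam N p) := by
  have h : 0 ≤ ∫ x, (∑ j ∈ s.1, (2 * (β * b)) * SxF N p β J b j x) ∂(gam N p) := by
    refine integral_nonneg fun x => ?_
    have := gm_comm_nonneg (Xm_herm β J b x) (SzProd_herm s.1) (SzProd_sq s.1)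
    rw [comm_eq] at this
    exact this
  rw [mean_comm β J b s j0] at h
  linarith

lemma key_ineq {N p : ℕ} {β J b : ℝ} (hβ : 0 < β) (hJ : 0 < J) (s : IX N p) (j0 : Fin N)
    (Φ : ℝ → ℝ) (hΦ : ∀ r : ℝ, 0 < r → Φ (r * Real.tanh r) = Real.tanh r / r) (hΦ0 : Φ 0 = 1) :
    β * J * cN N p * (Φ (p * β * b * ∫ x, SxF N p β J b j0 x ∂(gam N p))
        - ∫ x, SzF N p β J b s.1 x ^ 2 ∂(gam N p)) ≤
      ∫ x, x s * SzF N p β J b s.1 x ∂(gam N p) := by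
  obtain ⟨κ, hκ⟩ := sa_Phi Φ hΦ hΦ0 (t0_nonneg β J b s j0)
  generalize ht : p * β * b * ∫ x, SxF N p β J b j0 x ∂(gam N p) = t0 at *
  have hθ : 0 ≤ β * J * cN N p := mul_nonneg (mul_pos hβ hJ).le (Real.sqrt_nonneg _)
  generalize hθe : β * J * cN N p = θ at *
  have hGc : Continuous (fun x => ∑ j ∈ s.1, (2 * (β * b)) * SxF N p β J b j x) :=
    continuous_finsetSum _ fun j _ => (SxF_cont β J b j).const_mul _
  have hGb : ∀ x, |∑ j ∈ s.1, (2 * (β * b)) * SxF N p β J b j x| ≤ p * |2 * (β * b)| := by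
    intro x
    refine (Finset.abs_sum_le_sum_abs _ _).trans ?_
    refine (Finset.sum_le_card_nsmul _ _ (|2 * (β * b)|) fun j _ => ?_).trans (by rw [s.2, nsmul_eq_mul])
    rw [abs_mul]
    exact mul_le_of_le_one_right (abs_nonneg _) (SxF_abs β J b j x)
  have hm := mean_comm β J b s j0
  rw [ht] at hm
  generalize hG : (fun x => ∑ j ∈ s.1, (2 * (β * b)) * SxF N p β J b j x) = G at *
  have hGx : ∀ x, ∑ j ∈ s.1, (2 * (β * b)) * SxF N p β J b j x = G x := fun x => congrFun hG x
  simp only [hGx] at hm hGb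
  have hGi : Integrable G (gam N p) := cont_int hGc hGb
  have hib := sd_ibp (ι := IX N p) s (F := SzF N p β J b s.1)
    (L := fun x => θ * ((Φ t0 + κ * t0) - κ / 2 * G x - SzF N p β J b s.1 x ^ 2))
    (C := θ * 3) (C' := θ * (|Φ t0 + κ * t0| + |κ / 2| * (p * |2 * (β * b)|) + 1))
    (SzF_cont β J b s.1).measurable
    (Continuous.measurable (by
      have := SzF_cont (p := p) β J b s.1
      fun_prop))
    (SzF_abs β J b s.1)
    (by
      intro x
      rw [abs_mul, abs_of_nonneg hθ]
      refine mul_le_mul_of_nonneg_left ?_ hθ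
      refine (abs_sub _ _).trans (add_le_add ((abs_sub _ _).trans (add_le_add le_rfl ?_)) ?_)
      · rw [abs_mul]
        exact mul_le_mul_of_nonneg_left (hGb x) (abs_nonneg _)
      · rw [abs_pow]
        exact pow_le_one₀ (abs_nonneg _) (SzF_abs β J b s.1 x))
    (by
      intro x
      obtain ⟨D, hD, h0, h2, hc⟩ := gm_deriv (Xm_herm β J b x) (SzProd_herm s.1) (SzProd_sq s.1)
      have hc' := hc _ κ hκ
      rw [comm_eq, hGx] at hc'
      have hF := SzF_abs β J b s.1 x
      have hFF : gm (Xm N p β J b x) (SzProd N s.1) = SzF N p β J b s.1 x := rfl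
      rw [hFF] at hD
      have hF2 : SzF N p β J b s.1 x ^ 2 ≤ 1 := by
        rw [← sq_abs]; exact pow_le_one₀ (abs_nonneg _) hF
      refine ⟨(D - SzF N p β J b s.1 x ^ 2) * θ, ?_, ?_, ?_⟩
      · have hin : HasDerivAt (fun t : ℝ => θ * (t - x s)) θ (x s) := by
          simpa using ((hasDerivAt_id (x s)).sub_const (x s)).const_mul θ
        have h00 : θ * (x s - x s) = 0 := by rw [sub_self, mul_zero]
        rw [← h00] at hD
        have := HasDerivAt.comp (x s) hD hin
        refine this.congr_of_eventuallyEq (Filter.Eventually.of_forall fun t => ?_)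
        show gm (Xm N p β J b (Function.update x s t)) _ = gm (Xm N p β J b x + (θ * (t - x s)) • SzProd N s.1) _
        rw [Xm_update, hθe]
      · rw [abs_mul, abs_of_nonneg hθ, mul_comm]
        refine mul_le_mul_of_nonneg_left ?_ hθ
        rw [abs_le]
        constructor <;> nlinarith [sq_nonneg (SzF N p β J b s.1 x)]
      · rw [mul_comm]
        refine mul_le_mul_of_nonneg_right ?_ hθ
        linarith)
  have hsq := SzF_sq_int (p := p) β J b s.1
  have hL : ∫ x, θ * ((Φ t0 + κ * t0) - κ / 2 * G x - SzF N p β J b s.1 x ^ 2) ∂(gam N p) =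
      θ * (Φ t0 - ∫ x, SzF N p β J b s.1 x ^ 2 ∂(gam N p)) := by
    have hi1 : Integrable (fun x => (Φ t0 + κ * t0) - κ / 2 * G x) (gam N p) :=
      (integrable_const _).sub (hGi.const_mul _)
    rw [integral_const_mul, integral_sub hi1 hsq,
      integral_sub (integrable_const _) (hGi.const_mul _), integral_const_mul, hm, integral_const]
    simp only [probReal_univ, one_smul]
    ring
  rw [← hL]
  exact hib

lemma xF_int {N p : ℕ} (β J b : ℝ) (s : IX N p) :
    Integrable (fun x : IX N p → ℝ => x s * SzF N p β J b s.1 x) (gam N p) :=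
  (sd_integrable_coord s).mul_bdd (c := 1) (SzF_cont β J b s.1).aestronglyMeasurable
    (Filter.Eventually.of_forall (SzF_abs β J b s.1))

lemma gibbs_U {N p : ℕ} (β J b : ℝ) (g : Finset (Fin N) → ℝ) :
    gibbs β (HNp N p J b g) (UNp N p g) =
      (fun x : IX N p → ℝ => -∑ s : IX N p, cN N p * (x s * SzF N p β J b s.1 x)) (fun s => g s.1) := by
  change gm ((-β) • HNp N p J b g) (UNp N p g) = _
  rw [Xm_eq, UNp_eq, gm_neg, gm_sum]
  simp only [SzF, mul_assoc]

def RF (N p : ℕ) (β J b : ℝ) (x : IX N p → ℝ) : ℝ := ((N : ℝ)⁻¹) ^ p *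
      ∑ f : Fin p → Fin N, (gm (Xm N p β J b x) (diagonal (bF f))) ^ 2

lemma RF_cont {N p : ℕ} (β J b : ℝ) : Continuous (RF N p β J b) :=
  (continuous_finsetSum _ fun f _ =>
    (gm_cont (Xm_cont β J b) (fun x => Xm_herm β J b x) _).pow 2).const_mul _

lemma RF_int {N p : ℕ} (β J b : ℝ) : Integrable (RF N p β J b) (gam N p) := by
  refine Integrable.const_mul (integrable_finsetSum _ fun f _ => ?_) _
  refine cont_int (C := 1) ((gm_cont (Xm_cont β J b) (fun x => Xm_herm β J b x) _).pow 2) fun x => ?_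
  rw [abs_pow]
  exact pow_le_one₀ (abs_nonneg _) (gm_abs_le (Xm_herm β J b x) (bF_herm f) (bF_sq f))

lemma ext0_val {N p : ℕ} (x : IX N p → ℝ) : (fun s : IX N p => ext0 x s.1) = x := by
  funext s
  simp [ext0, s.2]

lemma RF_ge {N p : ℕ} (β J b : ℝ) (x : IX N p → ℝ) :
    ((N : ℝ)⁻¹) ^ p * ((p.factorial : ℝ) * ∑ s : IX N p, SzF N p β J b s.1 x ^ 2) ≤ RF N p β J b x := by
  have h := gibbs_R_ge (p := p) β J b (ext0 x)
  rw [gibbs_R, ext0_val] at h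
  exact h

lemma RF_mean_ge {N p : ℕ} (β J b : ℝ) :
    ((N : ℝ)⁻¹) ^ p * ((p.factorial : ℝ) * ∑ s : IX N p, ∫ x, SzF N p β J b s.1 x ^ 2 ∂(gam N p)) ≤
      ∫ x, RF N p β J b x ∂(gam N p) := by
  rw [← integral_finsetSum _ fun s _ => SzF_sq_int β J b s.1, ← integral_const_mul, ← integral_const_mul]
  refine integral_mono ?_ (RF_int β J b) fun x => RF_ge β J b x
  exact ((integrable_finsetSum _ fun s _ => SzF_sq_int β J b s.1).const_mul _).const_mul _

lemma arith {N p : ℕ} {B Ph : ℝ} (hp : 2 ≤ p) (hN : p ≤ N) (hB : 0 < B) (q y : IX N p → ℝ) (ER : ℝ)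
    (hER : ((N : ℝ)⁻¹) ^ p * ((p.factorial : ℝ) * ∑ s, q s) ≤ ER)
    (hy : ∀ s, B * cN N p * (Ph - q s) ≤ y s) :
    0 ≤ ER - alphaP N p * Ph - 2 / (B * N) * (-∑ s, cN N p * y s) := by
  have hN0 : (0 : ℝ) < N := by exact_mod_cast (show 0 < N by omega)
  have hc0 : 0 ≤ cN N p := Real.sqrt_nonneg _
  have hc2 : cN N p ^ 2 = (p.factorial : ℝ) / (2 * (N : ℝ) ^ (p - 1)) := Real.sq_sqrt (by positivity)
  have hcard : Fintype.card (IX N p) = N.choose p := by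
    rw [Fintype.card_finset_len, Fintype.card_fin]
  have h1 : B * cN N p ^ 2 * ((N.choose p : ℝ) * Ph - ∑ s, q s) ≤ ∑ s, cN N p * y s := by
    calc _ = ∑ s, cN N p * (B * cN N p * (Ph - q s)) := by
          rw [← Finset.mul_sum, ← Finset.mul_sum, Finset.sum_sub_distrib, Finset.sum_const,
            Finset.card_univ, hcard, nsmul_eq_mul]
          ring
      _ ≤ _ := Finset.sum_le_sum fun s _ => mul_le_mul_of_nonneg_left (hy s) hc0
  have h2 : 2 / (B * N) * (B * cN N p ^ 2 * ((N.choose p : ℝ) * Ph - ∑ s, q s)) ≤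
      2 / (B * N) * ∑ s, cN N p * y s := mul_le_mul_of_nonneg_left h1 (by positivity)
  have hpw : (N : ℝ) ^ p = N ^ (p - 1) * N := by
    rw [← pow_succ]; congr 1; omega
  have h3 : 2 / (B * N) * (B * cN N p ^ 2 * ((N.choose p : ℝ) * Ph - ∑ s, q s)) =
      alphaP N p * Ph - ((N : ℝ)⁻¹) ^ p * ((p.factorial : ℝ) * ∑ s, q s) := by
    have hch : (N.choose p : ℝ) * p.factorial * (N - p).factorial = N.factorial := by
      exact_mod_cast Nat.choose_mul_factorial_mul_factorial hN
    have hf : ((N - p).factorial : ℝ) ≠ 0 := by positivity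
    rw [hc2, alphaP, ← hch, inv_pow, hpw]
    field_simp
  linarith

lemma transfer {Ω : Type*} [MeasurableSpace Ω] (μ : Measure Ω) [IsProbabilityMeasure μ] {N p : ℕ}
    (g : Ω → Finset (Fin N) → ℝ)
    (hmeas : ∀ (s : Finset (Fin N)), Measurable fun ω => g ω s)
    (hgauss : ∀ (s : Finset (Fin N)), s.card = p → Measure.map (fun ω => g ω s) μ = gaussianReal 0 1)
    (hindep : iIndepFun (fun (s : {t : Finset (Fin N) // t.card = p}) ω => g ω s.1) μ)
    {f : (IX N p → ℝ) → ℝ} (hf : Continuous f) :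
    ∫ ω, f (fun s : IX N p => g ω s.1) ∂μ = ∫ x, f x ∂(gam N p) := by
  have h := (iIndepFun_iff_map_fun_eq_pi_map (fun s : IX N p => (hmeas s.1).aemeasurable)).1 hindep
  have h2 : (fun s : IX N p => Measure.map (fun ω => g ω s.1) μ) = fun _ => gaussianReal 0 1 :=
    funext fun s => hgauss s.1 s.2
  rw [h2] at h
  rw [gam, ← h, integral_map (measurable_pi_lambda _ fun s => hmeas s.1).aemeasurable
    hf.aestronglyMeasurable]

theorem stmt19
    {Ω : Type*} [MeasurableSpace Ω] (μ : Measure Ω) [IsProbabilityMeasure μ]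
    (p : ℕ) (hp : 2 ≤ p)
    (β J b : ℝ) (hβ : 0 < β) (hJ : 0 < J) (hb : 0 ≤ b)
    (g : (N : ℕ) → Ω → Finset (Fin N) → ℝ)
    (hmeas : ∀ (N : ℕ) (s : Finset (Fin N)), Measurable fun ω => g N ω s)
    (hgauss : ∀ (N : ℕ) (s : Finset (Fin N)), s.card = p →
      Measure.map (fun ω => g N ω s) μ = gaussianReal 0 1)
    (hindep : ∀ N : ℕ, iIndepFun
      (fun (s : {t : Finset (Fin N) // t.card = p}) ω => g N ω s.1) μ)
    (Φ : ℝ → ℝ) (hΦ : ∀ r : ℝ, 0 < r → Φ (r * Real.tanh r) = Real.tanh r / r)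
    (hΦ0 : Φ 0 = 1) :
    0 ≤ Filter.liminf
      (fun N : ℕ =>
        (∫ ω, gibbs β (Hdup N p J b (g N ω)) (RN N ^ p) ∂μ)
          - alphaP N p * Φ ((p : ℝ) * β * b *
              (if h : 0 < N then
                ∫ ω, gibbs β (HNp N p J b (g N ω)) (Sx N ⟨0, h⟩) ∂μ
              else 0))
          - (2 / (β * J * (N : ℝ)))
              * ∫ ω, gibbs β (HNp N p J b (g N ω)) (UNp N p (g N ω)) ∂μ)
      Filter.atTop := by
  rw [Filter.liminf_eq]
  refine Real.sSup_nonneg' ⟨0, ?_, le_rfl⟩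
  filter_upwards [Filter.eventually_ge_atTop p] with N hN
  have hN0 : 0 < N := by omega
  rw [dif_pos hN0]
  have hR : ∫ ω, gibbs β (Hdup N p J b (g N ω)) (RN N ^ p) ∂μ = ∫ x, RF N p β J b x ∂(gam N p) := by
    rw [← transfer μ (g N) (hmeas N) (hgauss N) (hindep N) (RF_cont β J b)]
    exact integral_congr_ae (Filter.Eventually.of_forall fun ω => gibbs_R β J b (g N ω))
  have hS : ∫ ω, gibbs β (HNp N p J b (g N ω)) (Sx N ⟨0, hN0⟩) ∂μ =
      ∫ x, SxF N p β J b ⟨0, hN0⟩ x ∂(gam N p) := by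
    rw [← transfer μ (g N) (hmeas N) (hgauss N) (hindep N) (SxF_cont β J b ⟨0, hN0⟩)]
    refine integral_congr_ae (Filter.Eventually.of_forall fun ω => ?_)
    change gm ((-β) • HNp N p J b (g N ω)) (Sx N ⟨0, hN0⟩) = gm (Xm N p β J b _) _
    rw [Xm_eq]
  have hUc : Continuous (fun x : IX N p → ℝ => -∑ s : IX N p, cN N p * (x s * SzF N p β J b s.1 x)) :=
    (continuous_finsetSum _ fun s _ => ((continuous_apply s).mul (SzF_cont β J b s.1)).const_mul _).neg
  have hU : ∫ ω, gibbs β (HNp N p J b (g N ω)) (UNp N p (g N ω)) ∂μ =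
      -∑ s : IX N p, cN N p * ∫ x, x s * SzF N p β J b s.1 x ∂(gam N p) := by
    rw [integral_congr_ae (Filter.Eventually.of_forall fun ω => gibbs_U β J b (g N ω)),
      transfer μ (g N) (hmeas N) (hgauss N) (hindep N) hUc, integral_neg,
      integral_finsetSum _ fun s _ => (xF_int β J b s).const_mul _]
    simp only [integral_const_mul]
  rw [hR, hS, hU]
  exact arith hp hN (mul_pos hβ hJ) _ _ _ (RF_mean_ge β J b)
    fun s => key_ineq hβ hJ s ⟨0, hN0⟩ Φ hΦ hΦ0
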